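/- arXiv:1603.06228 — 4 statements merged into one kernel-verified Lean document; each statement's English description precedes it below -/
import Mathlib

section
/- Let f be nilpotent on V over any field, and let d(r) denote the number of Jordan blocks of f of size r. If at most one Ulm invariant d(i) equals 1, then every characteristic subspace of V is hyperinvariant. -/
open LinearMap

variable {K : Type*} [Field K] {V : Type*} [AddCommGroup V] [Module K V]

/-- `X` is hyperinvariant for `f`: invariant under every endomorphism commuting with `f`. -/
def Hinv (f : V →ₗ[K] V) (X : Submodule K V) : Prop :=
  ∀ g : V →ₗ[K] V, g ∘ₗ f = f ∘ₗ g → X.map g ≤ X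

/-- `X` is characteristic for `f`: `f`-invariant and fixed by every automorphism commuting with `f`. -/
def Chinv (f : V →ₗ[K] V) (X : Submodule K V) : Prop :=
  X.map f ≤ X ∧
    ∀ α : V ≃ₗ[K] V, (α : V →ₗ[K] V) ∘ₗ f = f ∘ₗ (α : V →ₗ[K] V) →
      X.map (α : V →ₗ[K] V) = X

/-- The cyclic subspace generated by `x`. -/
def cyc (f : V →ₗ[K] V) (x : V) : Submodule K V :=
  Submodule.span K (Set.range fun i : ℕ => (f ^ i) x)

/-- `x` has exponent `ℓ`. -/
def ExpEq (f : V →ₗ[K] V) (x : V) (ℓ : ℕ) : Prop :=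
  (f ^ ℓ) x = 0 ∧ ∀ j < ℓ, (f ^ j) x ≠ 0

/-- `x` has height `q`. -/
def HeightEq (f : V →ₗ[K] V) (x : V) (q : ℕ) : Prop :=
  x ∈ LinearMap.range (f ^ q) ∧ x ∉ LinearMap.range (f ^ (q + 1))

/-- The `r`-th Ulm invariant: number of Jordan blocks of size `r` (for `r ≥ 1`). -/
noncomputable def ulm (f : V →ₗ[K] V) (r : ℕ) : ℕ :=
  Module.finrank K ↥(LinearMap.ker f ⊓ LinearMap.range (f ^ (r - 1))) -
    Module.finrank K ↥(LinearMap.ker f ⊓ LinearMap.range (f ^ r))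

/-- `u` is a generator tuple with exponents `t`. -/
def IsGenTuple {k : ℕ} (f : V →ₗ[K] V) (u : Fin k → V) (t : Fin k → ℕ) : Prop :=
  (∀ i, ExpEq f (u i) (t i)) ∧ DirectSum.IsInternal (fun i => cyc f (u i))

/-- The summand `⟨U_a⟩` of all cyclic subspaces whose generator has exponent `a`. -/
def subU {k : ℕ} (f : V →ₗ[K] V) (u : Fin k → V) (t : Fin k → ℕ) (a : ℕ) : Submodule K V :=
  ⨆ i ∈ {i : Fin k | t i = a}, cyc f (u i)

open Polynomial in
/-- A submodule of a finite product of cyclic modules which is stable under automorphisms is stable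
under endomorphisms, when at most one nonzero factor is unrepeated. -/
theorem core_stable {R : Type*} [CommRing R] {ι : Type*} [Fintype ι] [DecidableEq ι]
    (I : ι → Submodule R R) (S : Submodule R (∀ i, R ⧸ I i))
    (hS : ∀ α : (∀ i, R ⧸ I i) ≃ₗ[R] (∀ i, R ⧸ I i), ∀ x ∈ S, α x ∈ S)
    (hu : ∀ i j, I i ≠ ⊤ → (∀ l, I l = I i → l = i) → I j ≠ ⊤ → (∀ l, I l = I j → l = j) → i = j)
    (g : (∀ i, R ⧸ I i) →ₗ[R] (∀ i, R ⧸ I i)) (x : ∀ i, R ⧸ I i) (hx : x ∈ S) : g x ∈ S := by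
  have nil : ∀ h : (∀ i, R ⧸ I i) →ₗ[R] (∀ i, R ⧸ I i), (∀ y, h (h y) = 0) →
      ∀ y ∈ S, h y ∈ S := by
    intro h hh y hy
    let α : (∀ i, R ⧸ I i) ≃ₗ[R] (∀ i, R ⧸ I i) :=
      LinearEquiv.ofLinearMap (LinearMap.id + h) (LinearMap.id - h)
        (LinearMap.ext fun z => by simp [hh]) (LinearMap.ext fun z => by simp [hh])
    have h1 := S.sub_mem (hS α y hy) hy
    have h2 : α y - y = h y := by
      simp [α]
    rwa [h2] at h1
  have off : ∀ i j, i ≠ j → ∀ h : (R ⧸ I i) →ₗ[R] (R ⧸ I j), ∀ y ∈ S,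
      Pi.single j (h (y i)) ∈ S := by
    intro i j hij h y hy
    refine nil (LinearMap.single R _ j ∘ₗ h ∘ₗ LinearMap.proj i) ?_ y hy
    intro z
    simp [Pi.single_eq_of_ne hij]
  have part : ∀ i l, l ≠ i → I l = I i → ∀ y ∈ S, Pi.single i (y i) ∈ S := by
    intro i l hl hI y hy
    have h1 := off i l hl.symm (Submodule.quotEquivOfEq _ _ hI.symm).toLinearMap y hy
    have h2 := off l i hl (Submodule.quotEquivOfEq _ _ hI).toLinearMap _ h1
    have h3 : (Submodule.quotEquivOfEq _ _ hI) ((Submodule.quotEquivOfEq _ _ hI.symm) (y i))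
        = y i := by
      obtain ⟨r, hr⟩ := Submodule.Quotient.mk_surjective _ (y i)
      rw [← hr]; rfl
    simpa [h3] using h2
  have triv : ∀ i, I i = ⊤ → ∀ y ∈ S, Pi.single i (y i) ∈ S := by
    intro i hi y hy
    have : y i = 0 := by
      obtain ⟨r, hr⟩ := Submodule.Quotient.mk_surjective _ (y i)
      rw [← hr, Submodule.Quotient.mk_eq_zero, hi]; trivial
    rw [this]; simp
  have diag0 : ∀ i, ¬ (I i ≠ ⊤ ∧ ∀ l, I l = I i → l = i) → ∀ y ∈ S, Pi.single i (y i) ∈ S := by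
    intro i hi y hy
    by_cases h : I i = ⊤
    · exact triv i h y hy
    · have : ∃ l, I l = I i ∧ l ≠ i := by
        by_contra! hc
        exact hi ⟨h, hc⟩
      obtain ⟨l, h1, h2⟩ := this
      exact part i l h2 h1 y hy
  have diag : ∀ i, ∀ y ∈ S, Pi.single i (y i) ∈ S := by
    intro i y hy
    by_cases h : I i ≠ ⊤ ∧ ∀ l, I l = I i → l = i
    · have h1 : y = Pi.single i (y i) + ∑ j ∈ Finset.univ.erase i, Pi.single j (y j) := by
        rw [Finset.add_sum_erase _ (fun j => Pi.single j (y j)) (Finset.mem_univ i)]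
        exact (Finset.univ_sum_single y).symm
      have h2 : ∑ j ∈ Finset.univ.erase i, Pi.single j (y j) ∈ S := by
        refine Submodule.sum_mem _ fun j hj => diag0 j ?_ y hy
        rintro ⟨h3, h4⟩
        exact (Finset.ne_of_mem_erase hj) (hu j i h3 h4 h.1 h.2)
      have h3 := S.sub_mem hy h2
      rwa [sub_eq_of_eq_add h1] at h3
    · exact diag0 i h y hy
  have all : ∀ i j, ∀ h : (R ⧸ I i) →ₗ[R] (R ⧸ I j), ∀ y ∈ S, Pi.single j (h (y i)) ∈ S := by
    intro i j h y hy
    by_cases hij : i = j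
    · subst hij
      obtain ⟨c, hc⟩ := Submodule.Quotient.mk_surjective _ (h (Submodule.Quotient.mk 1))
      obtain ⟨r, hr⟩ := Submodule.Quotient.mk_surjective _ (y i)
      have : h (y i) = c • y i := by
        rw [← hr]
        have e1 : (Submodule.Quotient.mk r : R ⧸ I i) = r • Submodule.Quotient.mk 1 := by
          rw [← Submodule.Quotient.mk_smul]; simp
        have e2 : (Submodule.Quotient.mk c : R ⧸ I i) = c • Submodule.Quotient.mk 1 := by
          rw [← Submodule.Quotient.mk_smul]; simp
        rw [e1, map_smul, ← hc, e2, smul_comm]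
      rw [this, Pi.single_smul]
      exact S.smul_mem _ (diag i y hy)
    · exact off i j hij h y hy
  have h1 : g x = ∑ i, ∑ j, Pi.single j ((g (Pi.single i (x i))) j) := by
    conv_lhs => rw [← Finset.univ_sum_single x, map_sum]
    exact Finset.sum_congr rfl fun i _ => (Finset.univ_sum_single _).symm
  rw [h1]
  refine Submodule.sum_mem _ fun i _ => Submodule.sum_mem _ fun j _ => ?_
  exact all i j (LinearMap.proj j ∘ₗ g ∘ₗ LinearMap.single R (fun i => R ⧸ I i) i) x hx

open Polynomial in
/-- An unrepeated block of size `k i ≥ 1` has Ulm invariant one. -/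
theorem ulm_eq_one_of_unique {K : Type*} [Field K] {V : Type*} [AddCommGroup V] [Module K V]
    [FiniteDimensional K V] (f : V →ₗ[K] V) {d : ℕ} (k : Fin d → ℕ)
    (E : V → (∀ i : Fin d, K[X] ⧸ Submodule.span K[X] {(X : K[X]) ^ (k i)}))
    (hb : Function.Bijective E) (hadd : ∀ v w, E (v - w) = E v - E w)
    (hsm : ∀ (c : K) v, E (c • v) = (C c : K[X]) • E v)
    (hX : ∀ (n : ℕ) v, E ((f ^ n) v) = (X ^ n : K[X]) • E v)
    (i : Fin d) (hi : 1 ≤ k i) (hu : ∀ l, k l = k i → l = i) : ulm f (k i) = 1 := by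
  have E0 : E 0 = 0 := by simpa using hadd 0 0
  have hX1 : ∀ v, E (f v) = (X : K[X]) • E v := fun v => by simpa using hX 1 v
  have hker : ∀ w, w ∈ LinearMap.ker f ↔ (X : K[X]) • E w = 0 := by
    intro w
    rw [LinearMap.mem_ker, ← hX1, ← E0, hb.1.eq_iff]
  have hran : ∀ n w, w ∈ LinearMap.range (f ^ n) ↔ ∃ z, E w = (X ^ n : K[X]) • z := by
    intro n w
    constructor
    · rintro ⟨y, rfl⟩
      exact ⟨E y, hX n y⟩
    · rintro ⟨z, hz⟩
      obtain ⟨y, rfl⟩ := hb.2 z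
      exact ⟨y, hb.1 (by rw [hX, hz])⟩
  have hz : ∀ j (p : K[X]), (Submodule.Quotient.mk p :
      K[X] ⧸ Submodule.span K[X] {(X : K[X]) ^ (k j)}) = 0 ↔ (X : K[X]) ^ (k j) ∣ p := by
    intro j p
    rw [Submodule.Quotient.mk_eq_zero]
    exact Ideal.mem_span_singleton
  obtain ⟨s, hs⟩ : ∃ s, k i = s + 1 := ⟨k i - 1, by omega⟩
  obtain ⟨v, hv⟩ := hb.2 (Pi.single i (Submodule.Quotient.mk (X ^ s)))
  have vker : v ∈ LinearMap.ker f := by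
    rw [hker, hv, ← Pi.single_smul, ← Submodule.Quotient.mk_smul, (hz i _).2, Pi.single_zero]
    rw [hs, pow_succ, smul_eq_mul, mul_comm]
  have vran : v ∈ LinearMap.range (f ^ s) := by
    rw [hran]
    refine ⟨Pi.single i (Submodule.Quotient.mk 1), ?_⟩
    rw [hv, ← Pi.single_smul, ← Submodule.Quotient.mk_smul]; simp
  have vnot : v ∉ LinearMap.ker f ⊓ LinearMap.range (f ^ (s + 1)) := by
    rintro ⟨-, h⟩
    obtain ⟨z, hz'⟩ := (hran _ _).1 h
    have h1 := congrFun hz' i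
    rw [hv, Pi.single_eq_same, Pi.smul_apply] at h1
    obtain ⟨p, hp⟩ := Submodule.Quotient.mk_surjective _ (z i)
    rw [← hp, ← Submodule.Quotient.mk_smul, ← sub_eq_zero, ← Submodule.Quotient.mk_sub, hz, hs,
      smul_eq_mul] at h1
    have h2 := (dvd_sub_left (Dvd.intro p rfl)).1 h1
    have := (pow_dvd_pow_iff (X_ne_zero (R := K)) not_isUnit_X).1 h2
    omega
  have key : LinearMap.ker f ⊓ LinearMap.range (f ^ s) =
      (LinearMap.ker f ⊓ LinearMap.range (f ^ (s + 1))) ⊔ Submodule.span K {v} := by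
    apply le_antisymm
    · rintro w ⟨hw1, hw2⟩
      obtain ⟨z, hzw⟩ := (hran _ _).1 hw2
      have hw1' := (hker w).1 hw1
      obtain ⟨p, hp⟩ := Submodule.Quotient.mk_surjective _ (z i)
      have hmem : w - (p.coeff 0) • v ∈ LinearMap.ker f ⊓ LinearMap.range (f ^ (s + 1)) := by
        refine ⟨Submodule.sub_mem _ hw1 (Submodule.smul_mem _ _ vker), ?_⟩
        show _ ∈ LinearMap.range (f ^ (s + 1))
        rw [hran]
        have hc : ∀ j, ∃ y, E (w - (p.coeff 0) • v) j = (X ^ (s + 1) : K[X]) • y := by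
          intro j
          rw [hadd, hsm, hzw, hv]
          by_cases hj : j = i
          · subst hj
            refine ⟨Submodule.Quotient.mk p.divX, ?_⟩
            simp only [Pi.sub_apply, Pi.smul_apply, Pi.single_eq_same, ← hp,
              ← Submodule.Quotient.mk_smul, ← Submodule.Quotient.mk_sub]
            congr 1
            conv_lhs => rw [← Polynomial.divX_mul_X_add p]
            simp only [smul_eq_mul, coeff_add, coeff_mul_X_zero, coeff_C_zero, zero_add]
            ring
          · obtain ⟨q, hq⟩ := Submodule.Quotient.mk_surjective _ (z j)
            have hkj : k j ≠ s + 1 := fun h => hj (hu j (h.trans hs.symm))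
            simp only [Pi.sub_apply, Pi.smul_apply, Pi.single_eq_of_ne hj, smul_zero, sub_zero]
            rw [← hq, ← Submodule.Quotient.mk_smul]
            rcases lt_or_gt_of_ne hkj with h | h
            · refine ⟨0, ?_⟩
              rw [smul_zero, hz, smul_eq_mul]
              exact Dvd.dvd.mul_right (pow_dvd_pow _ (by omega)) _
            · have h1 := congrFun hw1' j
              rw [hzw, Pi.smul_apply, Pi.smul_apply, ← hq, ← Submodule.Quotient.mk_smul,
                ← Submodule.Quotient.mk_smul, Pi.zero_apply, hz, smul_eq_mul, smul_eq_mul,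
                ← mul_assoc, ← pow_succ'] at h1
              have h2 : (X : K[X]) ^ (s + 1) * X ∣ X ^ (s + 1) * q :=
                (pow_succ (X : K[X]) (s + 1) ▸ pow_dvd_pow _ h).trans h1
              obtain ⟨q', hq'⟩ :=
                (mul_dvd_mul_iff_left (pow_ne_zero (s + 1) (X_ne_zero (R := K)))).1 h2
              refine ⟨Submodule.Quotient.mk q', ?_⟩
              rw [← Submodule.Quotient.mk_smul, hq']
              congr 1
              simp only [smul_eq_mul]
              ring
        choose y hy using hc
        exact ⟨y, funext hy⟩
      rw [← sub_add_cancel w ((p.coeff 0) • v)]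
      exact Submodule.add_mem_sup hmem
        (Submodule.smul_mem _ _ (Submodule.mem_span_singleton_self v))
    · refine sup_le (inf_le_inf_left _ ?_) ?_
      · rintro _ ⟨y, rfl⟩
        exact ⟨f y, by rw [pow_succ]; rfl⟩
      · rw [Submodule.span_singleton_le_iff_mem]
        exact ⟨vker, vran⟩
  unfold ulm
  rw [hs, Nat.add_sub_cancel, key, Submodule.finrank_sup_span_singleton vnot]
  omega

open Polynomial in
theorem stmt11 [FiniteDimensional K V] (f : V →ₗ[K] V) (hf : IsNilpotent f)
    (hd : ∀ i j : ℕ, 1 ≤ i → 1 ≤ j → ulm f i = 1 → ulm f j = 1 → i = j) :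
    ∀ X : Submodule K V, Chinv f X → Hinv f X := by
  intro W hW
  obtain ⟨hW1, hW2⟩ := hW
  obtain ⟨n, hn⟩ := hf
  have htor : Module.IsTorsion' (Module.AEval' f) (Submonoid.powers (X : K[X])) := by
    rw [Submodule.isTorsion'_powers_iff]
    intro x
    refine ⟨n, ?_⟩
    obtain ⟨v, rfl⟩ := (Module.AEval'.of f).surjective x
    rw [Module.AEval'.X_pow_smul_of, hn]
    simp
  obtain ⟨d, k, ⟨e0⟩⟩ := Module.torsion_by_prime_power_decomposition
    (irreducible_X (R := K)) htor
  let e := e0.trans (DirectSum.linearEquivFunOnFintype K[X] (Fin d)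
    (fun i => K[X] ⧸ Submodule.span K[X] {(X : K[X]) ^ (k i)}))
  have hulm := ulm_eq_one_of_unique f k (fun v => e (Module.AEval'.of f v))
    (e.bijective.comp (Module.AEval'.of f).bijective) (fun v w => by simp)
    (fun c v => by
      rw [← map_smul e]; congr 1
      rw [map_smul, Module.AEval.C_smul])
    (fun m v => by
      rw [← map_smul e]; congr 1
      rw [Module.AEval'.X_pow_smul_of]; rfl)
  have hWf : W ∈ (Algebra.lsmul K K V f).invtSubmodule := by
    intro w hw
    exact hW1 ⟨w, hw, rfl⟩
  let S0 : Submodule K[X] (Module.AEval' f) := Module.AEval.mapSubmodule K V f ⟨W, hWf⟩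
  have hS0 : ∀ v, Module.AEval'.of f v ∈ S0 ↔ v ∈ W := by
    intro v
    simp [S0]
  let S := S0.map e.toLinearMap
  have hI : ∀ a b, Submodule.span K[X] {(X : K[X]) ^ a} = Submodule.span K[X] {(X : K[X]) ^ b} →
      a = b := by
    intro a b h
    have h' : Ideal.span {(X : K[X]) ^ a} = Ideal.span {(X : K[X]) ^ b} := h
    have h1 := (Ideal.span_singleton_le_span_singleton).1 h'.le
    have h2 := (Ideal.span_singleton_le_span_singleton).1 h'.ge
    have h3 := (pow_dvd_pow_iff (X_ne_zero (R := K)) not_isUnit_X).1 h1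
    have h4 := (pow_dvd_pow_iff (X_ne_zero (R := K)) not_isUnit_X).1 h2
    omega
  have htop : ∀ a, Submodule.span K[X] {(X : K[X]) ^ a} ≠ ⊤ → 1 ≤ a := by
    intro a h
    by_contra hc
    obtain rfl : a = 0 := by omega
    exact h (by rw [pow_zero]; exact Ideal.span_singleton_one)
  have hcore := core_stable (fun i => Submodule.span K[X] {(X : K[X]) ^ (k i)}) S
    (by
      rintro α _ ⟨y, hy, rfl⟩
      obtain ⟨v, rfl⟩ := (Module.AEval'.of f).surjective y
      have hv : v ∈ W := (hS0 v).1 hy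
      let β : Module.AEval' f ≃ₗ[K[X]] Module.AEval' f := (e.trans α).trans e.symm
      let γ : V ≃ₗ[K] V := ((Module.AEval'.of f).trans (β.restrictScalars K)).trans
        (Module.AEval'.of f).symm
      have hγ : ∀ w, γ w = (Module.AEval'.of f).symm (β (Module.AEval'.of f w)) := fun w => rfl
      have hc : (γ : V →ₗ[K] V) ∘ₗ f = f ∘ₗ (γ : V →ₗ[K] V) := by
        ext w
        simp only [LinearMap.comp_apply, LinearEquiv.coe_coe, hγ]
        rw [← Module.AEval'.X_smul_of, map_smul, Module.AEval'.of_symm_X_smul]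
      have h1 : γ v ∈ W := by
        rw [← hW2 γ hc]
        exact ⟨v, hv, rfl⟩
      refine ⟨Module.AEval'.of f (γ v), (hS0 _).2 h1, ?_⟩
      simp [hγ, β])
    (by
      intro i j hi1 hi2 hj1 hj2
      have hi := htop _ hi1
      have hj := htop _ hj1
      have h1 := hulm i hi (fun l hl => hi2 l (by simp only [hl]))
      have h2 := hulm j hj (fun l hl => hj2 l (by simp only [hl]))
      have h3 := hd _ _ hi hj h1 h2
      exact hj2 i (by simp only [h3]))
  intro g hg
  rintro _ ⟨v, hv, rfl⟩
  let G : Module.AEval' f →ₗ[K[X]] Module.AEval' f :=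
    LinearMap.ofAEval f ((Module.AEval'.of f).toLinearMap ∘ₗ g) (by
      intro m
      have := LinearMap.congr_fun hg m
      simp only [LinearMap.comp_apply, LinearEquiv.coe_coe] at this ⊢
      rw [Module.AEval'.X_smul_of, ← this]; rfl)
  have h1 := hcore (e.toLinearMap ∘ₗ G ∘ₗ e.symm.toLinearMap) (e (Module.AEval'.of f v))
    ⟨_, (hS0 v).2 hv, rfl⟩
  obtain ⟨y, hy, hye⟩ := h1
  have h2 : y = Module.AEval'.of f (g v) := by
    apply e.injective
    refine hye.trans ?_
    simp [G, LinearMap.ofAEval]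
  rw [h2] at hy
  exact (hS0 _).1 hy
end

section
/- Let f be nilpotent on V with Ulm invariants d(r) (number of Jordan blocks of size r). If exactly two Ulm invariants d(i), d(j) equal 1 and j = i + 1 (the corresponding sizes are consecutive integers), then every characteristic subspace of V is hyperinvariant. -/
open LinearMap

variable {K : Type*} [Field K] {V : Type*} [AddCommGroup V] [Module K V]

section aux
open Polynomial

theorem aux_decomp [FiniteDimensional K V] (f : V →ₗ[K] V) (hf : IsNilpotent f) :
    ∃ (d : ℕ) (k : Fin d → ℕ) (u : Fin d → V),
      (∀ s (p : K[X]), aeval f p (u s) = 0 ↔ X ^ (k s) ∣ p) ∧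
      (∀ v, ∃ c : Fin d → K[X], v = ∑ s, aeval f (c s) (u s)) ∧
      (∀ w : Fin d → V, (∀ s, (f ^ k s) (w s) = 0) →
        ∃ g : V →ₗ[K] V, g ∘ₗ f = f ∘ₗ g ∧ ∀ s, g (u s) = w s) := by
  obtain ⟨n, hn⟩ := hf
  have hsm : ∀ (p : K[X]) (v : V), p • Module.AEval'.of f v = Module.AEval'.of f (aeval f p v) := by
    intro p v
    exact (Module.AEval.of_aeval_smul (R := K) (A := Module.End K V) (M := V) f p v).symm
  have htor : Module.IsTorsion' (Module.AEval' f) (Submonoid.powers (X : K[X])) := by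
    intro x
    refine ⟨⟨X ^ n, n, rfl⟩, ?_⟩
    obtain ⟨v, rfl⟩ := (Module.AEval'.of f).surjective x
    change (X ^ n : K[X]) • Module.AEval'.of f v = 0
    rw [hsm]
    simp [hn]
  obtain ⟨d, k, ⟨e⟩⟩ := Module.torsion_by_prime_power_decomposition
    (R := K[X]) (M := Module.AEval' f) (p := X) Polynomial.irreducible_X htor
  let o := Module.AEval'.of f
  let b : ∀ s, DirectSum (Fin d) (fun i => K[X] ⧸ Submodule.span K[X] {(X:K[X]) ^ k i}) :=
    fun s => DirectSum.lof K[X] (Fin d) (fun i => K[X] ⧸ Submodule.span K[X] {(X:K[X]) ^ k i}) s (Submodule.Quotient.mk 1)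
  have hb : ∀ s (p : K[X]), p • b s = DirectSum.lof K[X] (Fin d) (fun i => K[X] ⧸ Submodule.span K[X] {(X:K[X]) ^ k i}) s (Submodule.Quotient.mk p) := by
    intro s p
    simp only [b]
    rw [← map_smul, ← Submodule.Quotient.mk_smul]
    simp
  have key : ∀ s (p : K[X]), aeval f p (o.symm (e.symm (b s))) = o.symm (e.symm (p • b s)) := by
    intro s p
    apply o.injective
    have h := hsm p (o.symm (e.symm (b s)))
    change p • o _ = o _ at h
    rw [LinearEquiv.apply_symm_apply] at h
    rw [LinearEquiv.apply_symm_apply, map_smul]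
    exact h.symm
  refine ⟨d, k, fun s => o.symm (e.symm (b s)), ?_, ?_, ?_⟩
  · intro s p
    rw [key, hb]
    simp only [LinearEquiv.map_eq_zero_iff]
    rw [← Ideal.mem_span_singleton]
    rw [DirectSum.lof_eq_of]
    rw [← Submodule.Quotient.mk_eq_zero]
    exact map_eq_zero_iff _ (DirectSum.of_injective s)
  · intro v
    choose c hc using fun s => Submodule.Quotient.mk_surjective _ ((e (o v)) s)
    refine ⟨c, ?_⟩
    simp only [key, hb, hc]
    rw [← map_sum, ← map_sum]
    have := DirectSum.sum_univ_of (e (o v))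
    simp only [DirectSum.lof_eq_of]
    rw [this]
    simp
  · intro w hw
    let G := DirectSum.toModule K[X] (Fin d) (Module.AEval' f) (fun s =>
      Submodule.liftQ (Submodule.span K[X] {(X:K[X]) ^ k s}) (LinearMap.toSpanSingleton K[X] (Module.AEval' f) (o (w s)))
       (by
        rw [Submodule.span_singleton_le_iff_mem]
        simp only [LinearMap.mem_ker, LinearMap.toSpanSingleton_apply]
        rw [hsm]
        simp [hw]))
    have hG : ∀ s, G (b s) = o (w s) := by
      intro s
      simp only [G, b]
      rw [DirectSum.toModule_lof]
      rw [Submodule.liftQ_apply]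
      simp
    let H : Module.AEval' f →ₗ[K[X]] Module.AEval' f := G ∘ₗ e.toLinearMap
    have hHf : ∀ v, H (o (f v)) = o (f (o.symm (H (o v)))) := by
      intro v
      have h1 : o (f v) = (X:K[X]) • o v := by rw [hsm]; simp [o]
      have h2 : ∀ z, o (f (o.symm z)) = (X:K[X]) • z := by
        intro z
        obtain ⟨v, rfl⟩ := o.surjective z
        rw [hsm]; simp [o]
      rw [h1, h2, map_smul]
    refine ⟨o.symm.toLinearMap ∘ₗ (H.restrictScalars K) ∘ₗ o.toLinearMap, ?_, ?_⟩
    · ext v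
      simp [hHf]
    · intro s
      simp [H, hG]

theorem aux_comm (f g : V →ₗ[K] V) (h : g ∘ₗ f = f ∘ₗ g) (p : K[X]) (v : V) :
    g (aeval f p v) = aeval f p (g v) := by
  have hc : Commute g f := h
  have hpow : ∀ n : ℕ, Commute g (f ^ n) := fun n => hc.pow_right n
  induction p using Polynomial.induction_on' with
  | add p q hp hq => simp [hp, hq]
  | monomial n a =>
    have := LinearMap.congr_fun (hpow n).eq v
    simp only [Module.End.mul_apply] at this
    simp [aeval_monomial, Module.algebraMap_end_apply, this]

theorem aux_mem (f : V →ₗ[K] V) (W : Submodule K V) (h : W.map f ≤ W) (p : K[X]) {v : V}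
    (hv : v ∈ W) : aeval f p v ∈ W := by
  have hpow : ∀ n : ℕ, ∀ v ∈ W, (f ^ n) v ∈ W := by
    intro n
    induction n with
    | zero => intro v hv; simpa using hv
    | succ n ih =>
      intro v hv
      rw [pow_succ, Module.End.mul_apply]
      exact ih _ (h (Submodule.mem_map_of_mem hv))
  induction p using Polynomial.induction_on' with
  | add p q hp hq => simpa using W.add_mem hp hq
  | monomial n a =>
    simp only [aeval_monomial, Module.End.mul_apply, Module.algebraMap_end_apply]
    exact W.smul_mem _ (hpow n v hv)

theorem aux_poly1 (p q : K[X]) (N : ℕ) (m n : ℕ) (p' q' : K[X]) (hp : p = X ^ m * p')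
    (hq : q = X ^ n * q') (hq' : ¬ X ∣ q') (hmn : n ≤ m) : ∃ c, X ^ N ∣ p - c * q := by
  have hco : IsCoprime (X ^ N) q' :=
    IsCoprime.pow_left ((Polynomial.irreducible_X.coprime_iff_not_dvd).2 hq')
  obtain ⟨a, b, hab⟩ := hco
  obtain ⟨l, rfl⟩ := Nat.exists_eq_add_of_le hmn
  refine ⟨X ^ l * p' * b, X ^ (n + l) * p' * a, ?_⟩
  rw [hp, hq]
  linear_combination (-X ^ (n + l) * p') * hab

theorem aux_poly (p q : K[X]) (N : ℕ) :
    (∃ c, X ^ N ∣ p - c * q) ∨ (∃ c, X ^ N ∣ q - c * (X * p)) := by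
  by_cases hp : p = 0
  · left; exact ⟨0, by simp [hp]⟩
  by_cases hq : q = 0
  · right; exact ⟨0, by simp [hq]⟩
  obtain ⟨m, p', hp', hpe⟩ := WfDvdMonoid.max_power_factor hp Polynomial.irreducible_X
  obtain ⟨n, q', hq', hqe⟩ := WfDvdMonoid.max_power_factor hq Polynomial.irreducible_X
  rcases le_or_gt n m with h | h
  · left; exact aux_poly1 p q N m n p' q' hpe hqe hq' h
  · right
    refine aux_poly1 q (X * p) N n (m + 1) q' p' hqe ?_ hp' h
    rw [hpe]; ring

section
variable {d : ℕ} {f : V →ₗ[K] V} {k : Fin d → ℕ} {u : Fin d → V}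

theorem aux_ext (h2 : ∀ v, ∃ c : Fin d → K[X], v = ∑ s, aeval f (c s) (u s))
    {g g' : V →ₗ[K] V} (hg : g ∘ₗ f = f ∘ₗ g) (hg' : g' ∘ₗ f = f ∘ₗ g')
    (h : ∀ s, g (u s) = g' (u s)) : g = g' := by
  ext v
  obtain ⟨c, rfl⟩ := h2 v
  simp only [map_sum, aux_comm f g hg, aux_comm f g' hg', h]

theorem aux_val {g : V →ₗ[K] V} (hg : g ∘ₗ f = f ∘ₗ g) (s : Fin d)
    (h0 : ∀ t, t ≠ s → g (u t) = 0) (c : Fin d → K[X]) :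
    g (∑ t, aeval f (c t) (u t)) = aeval f (c s) (g (u s)) := by
  simp only [map_sum, aux_comm f g hg]
  rw [Finset.sum_eq_single s]
  · intro t _ ht; rw [h0 t ht, map_zero]
  · simp

theorem aux_off (h2 : ∀ v, ∃ c : Fin d → K[X], v = ∑ s, aeval f (c s) (u s))
    {W : Submodule K V} (hW : Chinv f W) {s t : Fin d} (hst : t ≠ s)
    {g : V →ₗ[K] V} (hg : g ∘ₗ f = f ∘ₗ g) (c : K[X]) (hs : g (u s) = aeval f c (u t))
    (h0 : ∀ t, t ≠ s → g (u t) = 0) {x : V} (hx : x ∈ W) : g x ∈ W := by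
  have hgf : ∀ v, g (f v) = f (g v) := fun v => LinearMap.congr_fun hg v
  have hgg : g ∘ₗ g = 0 := by
    refine aux_ext (f := f) (u := u) h2 (by ext v; simp [hgf]) (by simp) ?_
    intro r
    by_cases hr : r = s
    · subst hr
      simp [hs, aux_comm f g hg, h0 t hst]
    · simp [h0 r hr]
  have hgg' : ∀ v, g (g v) = 0 := fun v => LinearMap.congr_fun hgg v
  let α : V ≃ₗ[K] V := LinearEquiv.ofLinearMap (LinearMap.id + g) (LinearMap.id - g)
    (by ext v; simp [hgg']) (by ext v; simp [hgg'])
  have hα := hW.2 α (by ext v; simp [α, hgf])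
  have : α x ∈ W := by
    have h := Submodule.mem_map_of_mem (f := (α : V →ₗ[K] V)) hx
    rw [hα] at h
    exact h
  have h2 := W.sub_mem this hx
  simpa [α] using h2

theorem aux_ulm [FiniteDimensional K V]
    (h1 : ∀ s (p : K[X]), aeval f p (u s) = 0 ↔ X ^ (k s) ∣ p)
    (h2 : ∀ v, ∃ c : Fin d → K[X], v = ∑ s, aeval f (c s) (u s))
    (π : Fin d → V →ₗ[K] V) (hπ : ∀ s, π s ∘ₗ f = f ∘ₗ π s) (hπs : ∀ s, π s (u s) = u s)
    (hπt : ∀ s t, t ≠ s → π s (u t) = 0) (s : Fin d) (hs : 1 ≤ k s)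
    (hu : ∀ t, t ≠ s → k t ≠ k s) : ulm f (k s) = 1 := by
  obtain ⟨r, hr⟩ := Nat.exists_eq_add_of_le' hs
  unfold ulm
  set z := (f ^ r) (u s) with hz
  have hfz : f z = 0 := by
    have := (h1 s (X ^ (r + 1))).2 (by rw [hr])
    simpa [hz, pow_succ'] using this
  have hzn : z ∉ LinearMap.range (f ^ (r + 1)) := by
    rintro ⟨v, hv⟩
    obtain ⟨c, rfl⟩ := h2 v
    have e1 : π s z = z := by
      have := aux_comm f (π s) (hπ s) (X ^ r) (u s)
      simpa [hπs, hz] using this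
    have e2 := aux_comm f (π s) (hπ s) (X ^ (r + 1)) (∑ t, aeval f (c t) (u t))
    rw [aux_val (hπ s) s (hπt s), hπs, ← Module.End.mul_apply (aeval f _) (aeval f _), ← map_mul,
      (h1 s _).2 (by rw [hr]; exact dvd_mul_right _ _), aeval_X_pow, hv, e1] at e2
    have := (h1 s (X ^ r)).1 (by simpa using e2)
    rw [hr] at this
    have h3 := (pow_dvd_pow_iff (Polynomial.X_ne_zero (R := K)) Polynomial.not_isUnit_X).1 this
    omega
  have hz0 : z ≠ 0 := by
    rintro h; apply hzn; rw [h]; exact Submodule.zero_mem _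
  have hsup : LinearMap.ker f ⊓ LinearMap.range (f ^ r) =
      (LinearMap.ker f ⊓ LinearMap.range (f ^ (r + 1))) ⊔ Submodule.span K {z} := by
    apply le_antisymm
    · rintro _ ⟨hv0, w, rfl⟩
      obtain ⟨c, rfl⟩ := h2 w
      have hc0 : ∀ t, X ^ k t ∣ X ^ (r + 1) * c t := by
        intro t
        rw [← h1]
        have e2 := aux_comm f (π t) (hπ t) (X ^ (r + 1)) (∑ t, aeval f (c t) (u t))
        rw [aux_val (hπ t) t (hπt t), hπs, ← Module.End.mul_apply (aeval f _) (aeval f _), ← map_mul] at e2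
        rw [← e2]
        have : aeval f (X ^ (r + 1) : K[X]) (∑ t, aeval f (c t) (u t)) = 0 := by
          simpa [pow_succ'] using hv0
        rw [this, map_zero]
      rw [map_sum]
      refine Submodule.sum_mem _ fun t _ => ?_
      have et : (f ^ r) (aeval f (c t) (u t)) = aeval f (X ^ r * c t) (u t) := by simp
      rw [et]
      rcases lt_trichotomy (k t) (k s) with h | h | h
      · rw [(h1 t _).2]
        · exact Submodule.zero_mem _
        · exact (pow_dvd_pow X (by omega)).trans (dvd_mul_right _ _)
      · have hts : t = s := by
          by_contra hne
          exact hu t hne h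
        subst hts
        apply Submodule.mem_sup_right
        rw [Submodule.mem_span_singleton]
        refine ⟨(c t).coeff 0, ?_⟩
        have hd : X ^ k t ∣ X ^ r * c t - C ((c t).coeff 0) * X ^ r := by
          have : X ∣ c t - C ((c t).coeff 0) := by
            rw [Polynomial.X_dvd_iff]; simp
          obtain ⟨y, hy⟩ := this
          refine ⟨y, ?_⟩
          rw [hr]
          linear_combination X ^ r * hy
        have := (h1 t _).2 hd
        rw [map_sub, LinearMap.sub_apply, sub_eq_zero] at this
        rw [this]
        simp [hz, Module.algebraMap_end_apply]
      · apply Submodule.mem_sup_left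
        refine ⟨?_, ?_⟩
        · have := (h1 t _).2 (hc0 t)
          change f _ = 0
          simpa [pow_succ'] using this
        · have hX : X ∣ c t := by
            have h3 : (X : K[X]) ^ (r + 1) * X ∣ X ^ (r + 1) * c t := by
              rw [← pow_succ]
              exact (pow_dvd_pow X (by omega)).trans (hc0 t)
            exact (mul_dvd_mul_iff_left (pow_ne_zero _ Polynomial.X_ne_zero)).1 h3
          obtain ⟨y, hy⟩ := hX
          refine ⟨aeval f y (u t), ?_⟩
          rw [hy]
          simp [pow_succ]
    · apply sup_le
      · refine inf_le_inf_left _ ?_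
        rintro _ ⟨w, rfl⟩
        exact ⟨f w, by simp [pow_succ]⟩
      · rw [Submodule.span_singleton_le_iff_mem]
        exact ⟨hfz, u s, rfl⟩
  have hinf : (LinearMap.ker f ⊓ LinearMap.range (f ^ (r + 1))) ⊓ Submodule.span K {z} = ⊥ := by
    rw [eq_bot_iff]
    rintro y ⟨⟨_, hy⟩, hy2⟩
    obtain ⟨a, rfl⟩ := Submodule.mem_span_singleton.1 hy2
    by_cases ha : a = 0
    · simp [ha]
    · exact absurd ((Submodule.smul_mem_iff _ ha).1 hy) hzn
  have hdim := Submodule.finrank_sup_add_finrank_inf_eq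
    (LinearMap.ker f ⊓ LinearMap.range (f ^ (r + 1))) (Submodule.span K {z})
  rw [← hsup, hinf, finrank_bot, finrank_span_singleton hz0] at hdim
  rw [hr, Nat.add_sub_cancel]
  omega

theorem aux_pair 
    (h1 : ∀ s (p : K[X]), aeval f p (u s) = 0 ↔ X ^ (k s) ∣ p)
    (h2 : ∀ v, ∃ c : Fin d → K[X], v = ∑ s, aeval f (c s) (u s))
    (hE : ∀ s w, (f ^ k s) w = 0 → ∃ g : V →ₗ[K] V, g ∘ₗ f = f ∘ₗ g ∧ g (u s) = w ∧
      ∀ t, t ≠ s → g (u t) = 0)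
    (π : Fin d → V →ₗ[K] V) (hπ : ∀ s, π s ∘ₗ f = f ∘ₗ π s) (hπs : ∀ s, π s (u s) = u s)
    (hπt : ∀ s t, t ≠ s → π s (u t) = 0) {W : Submodule K V} (hW : Chinv f W)
    (a b : Fin d) (hab : k b = k a + 1) {x : V} (hx : x ∈ W)
    (hsum : π a x + π b x ∈ W) : π a x ∈ W ∧ π b x ∈ W := by
  have hne : a ≠ b := by rintro rfl; omega
  suffices h : π a x ∈ W ∨ π b x ∈ W by
    rcases h with h | h
    · exact ⟨h, by simpa using W.sub_mem hsum h⟩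
    · exact ⟨by simpa using W.sub_mem hsum h, h⟩
  obtain ⟨ψ, hψ, hψb, hψ0⟩ := hE b (u a) (by
    have := (h1 a (X ^ k b)).2 (pow_dvd_pow X (by omega))
    simpa using this)
  obtain ⟨φ, hφ, hφa, hφ0⟩ := hE a (aeval f (X : K[X]) (u b)) (by
    have := (h1 b (X ^ k a * X)).2 (by rw [← pow_succ, hab])
    simpa using this)
  have hψx := aux_off h2 hW hne hψ 1 (by simp [hψb]) hψ0 hx
  have hφx := aux_off h2 hW hne.symm hφ X hφa hφ0 hx
  obtain ⟨c, rfl⟩ := h2 x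
  rw [aux_val hψ b hψ0, hψb] at hψx
  rw [aux_val hφ a hφ0, hφa] at hφx
  rw [aux_val (hπ a) a (hπt a), aux_val (hπ b) b (hπt b), hπs, hπs]
  rcases aux_poly (c a) (c b) (k b) with ⟨e, he⟩ | ⟨e, he⟩
  · left
    have h3 := (h1 a _).2 ((pow_dvd_pow X (by omega : k a ≤ k b)).trans he)
    rw [map_sub, LinearMap.sub_apply, sub_eq_zero] at h3
    rw [h3, map_mul, Module.End.mul_apply]
    exact aux_mem f W hW.1 e hψx
  · right
    have h3 := (h1 b _).2 he
    rw [map_sub, LinearMap.sub_apply, sub_eq_zero] at h3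
    rw [h3, map_mul, Module.End.mul_apply, mul_comm X, map_mul, Module.End.mul_apply]
    exact aux_mem f W hW.1 e hφx

theorem aux_main [FiniteDimensional K V] (f : V →ₗ[K] V) (hf : IsNilpotent f)
    (i : ℕ) (hset : {r : ℕ | 1 ≤ r ∧ ulm f r = 1} = {i, i + 1}) :
    ∀ W : Submodule K V, Chinv f W → Hinv f W := by
  intro W hW
  obtain ⟨d, k, u, h1, h2, h3⟩ := aux_decomp f hf
  have hE : ∀ s w, (f ^ k s) w = 0 → ∃ g : V →ₗ[K] V, g ∘ₗ f = f ∘ₗ g ∧ g (u s) = w ∧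
      ∀ t, t ≠ s → g (u t) = 0 := by
    intro s w hw
    obtain ⟨g, hg, hgu⟩ := h3 (Pi.single s w) (by
      intro t
      by_cases h : t = s
      · subst h; simpa using hw
      · simp [h])
    refine ⟨g, hg, by simp [hgu], fun t ht => by simp [hgu, ht]⟩
  have hku : ∀ s n, k s ≤ n → (f ^ n) (u s) = 0 := by
    intro s n h
    have := (h1 s (X ^ n)).2 (pow_dvd_pow X h)
    simpa using this
  choose π hπ hπs hπt using fun s => hE s (u s) (hku s _ le_rfl)
  have hπ' : ∀ s v, π s (f v) = f (π s v) := fun s v => LinearMap.congr_fun (hπ s) v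
  -- the projections sum to the identity
  have hone : ∀ x, ∑ s, π s x = x := by
    intro x
    obtain ⟨c, rfl⟩ := h2 x
    refine Finset.sum_congr rfl fun s _ => ?_
    rw [aux_val (hπ s) s (hπt s), hπs]
  -- projections to repeated (or trivial) blocks preserve `W`
  have hgood : ∀ s t, t ≠ s → k t = k s → ∀ x ∈ W, π s x ∈ W := by
    intro s t hts hk x hx
    obtain ⟨g, hg, hgs, hg0⟩ := hE s (u t) (hku t _ hk.le)
    obtain ⟨g', hg', hgs', hg0'⟩ := hE t (u s) (hku s _ hk.ge)
    have e : π s = g' ∘ₗ g := by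
      refine aux_ext h2 (hπ s) ?_ ?_
      · rw [LinearMap.comp_assoc, hg, ← LinearMap.comp_assoc, hg', LinearMap.comp_assoc]
      · intro r
        by_cases hr : r = s
        · subst hr; simp [hπs, hgs, hgs']
        · simp [hπt s r hr, hg0 r hr]
    rw [e]
    exact aux_off h2 hW hts.symm hg' 1 (by simp [hgs']) hg0'
      (aux_off h2 hW hts hg 1 (by simp [hgs]) hg0 hx)
  have hzero : ∀ s, k s = 0 → ∀ x ∈ W, π s x ∈ W := by
    intro s hs x hx
    have hu : u s = 0 := by simpa using hku s 0 hs.le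
    obtain ⟨c, rfl⟩ := h2 x
    rw [aux_val (hπ s) s (hπt s), hπs, hu, map_zero]
    exact W.zero_mem
  have hbad : ∀ s, ¬ (∀ x ∈ W, π s x ∈ W) → (∀ t, t ≠ s → k t ≠ k s) ∧ (k s = i ∨ k s = i + 1) := by
    intro s hs
    have hq : ∀ t, t ≠ s → k t ≠ k s := fun t ht hk => hs (hgood s t ht hk)
    have hs1 : 1 ≤ k s := by
      by_contra h
      exact hs (hzero s (by omega))
    refine ⟨hq, ?_⟩
    have : k s ∈ {r : ℕ | 1 ≤ r ∧ ulm f r = 1} := ⟨hs1, aux_ulm h1 h2 π hπ hπs hπt s hs1 hq⟩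
    rw [hset] at this
    simpa using this
  have hall : ∀ s, ∀ x ∈ W, π s x ∈ W := by
    intro s
    by_contra hs
    obtain ⟨hsu, hsi⟩ := hbad s hs
    by_cases hex : ∃ t, t ≠ s ∧ ¬ (∀ x ∈ W, π t x ∈ W)
    · obtain ⟨t, hts, ht⟩ := hex
      obtain ⟨htu, hti⟩ := hbad t ht
      have hkk := hsu t hts
      have hsum : ∀ x ∈ W, π s x + π t x ∈ W := by
        intro x hx
        have e := hone x
        rw [← Finset.add_sum_erase _ _ (Finset.mem_univ s),
          ← Finset.add_sum_erase (Finset.univ.erase s) _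
            (Finset.mem_erase.2 ⟨hts, Finset.mem_univ t⟩), ← add_assoc] at e
        rw [eq_sub_of_add_eq e]
        refine W.sub_mem hx (W.sum_mem fun r hr => ?_)
        simp only [Finset.mem_erase, Finset.mem_univ, and_true] at hr
        by_contra hr'
        obtain ⟨hru, hri⟩ := hbad r (fun h => hr' (h x hx))
        have := hsu r hr.2
        have := htu r hr.1
        omega
      apply hs
      intro x hx
      have hst : k t = k s + 1 ∨ k s = k t + 1 := by omega
      rcases hst with h | h
      · exact (aux_pair h1 h2 hE π hπ hπs hπt hW s t h hx (hsum x hx)).1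
      · exact (aux_pair h1 h2 hE π hπ hπs hπt hW t s h hx
          (by rw [add_comm]; exact hsum x hx)).2
    · push Not at hex
      apply hs
      intro x hx
      have e := hone x
      rw [← Finset.add_sum_erase _ _ (Finset.mem_univ s)] at e
      rw [eq_sub_of_add_eq e]
      refine W.sub_mem hx (W.sum_mem fun r hr => ?_)
      exact hex r (Finset.ne_of_mem_erase hr) x hx
  intro g hg
  have hg' : ∀ v, g (f v) = f (g v) := fun v => LinearMap.congr_fun hg v
  rintro _ ⟨x, hx, rfl⟩
  have hx' : g x = ∑ t, ∑ s, π t (g (π s x)) := by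
    simp_rw [← map_sum, hone]
  rw [hx']
  refine W.sum_mem fun t _ => W.sum_mem fun s _ => ?_
  obtain ⟨c, hc⟩ := h2 (g (u s))
  have hcs : π t (g (u s)) = aeval f (c t) (u t) := by
    rw [hc, aux_val (hπ t) t (hπt t), hπs]
  have hcomm : (π t ∘ₗ g ∘ₗ π s) ∘ₗ f = f ∘ₗ (π t ∘ₗ g ∘ₗ π s) := by
    ext v; simp [hπ', hg']
  by_cases hst : t = s
  · subst hst
    have e : π t (g (π t x)) = aeval f (c t) (π t x) := by
      obtain ⟨b, rfl⟩ := h2 x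
      have e1 := aux_val (u := u) hcomm t (fun r hr => by simp [hπt t r hr]) b
      simp only [LinearMap.comp_apply] at e1
      rw [e1, aux_val (hπ t) t (hπt t), hπs, hcs, ← Module.End.mul_apply,
        ← Module.End.mul_apply, ← map_mul, ← map_mul, mul_comm]
    rw [e]
    exact aux_mem f W hW.1 _ (hall t x hx)
  · exact aux_off h2 hW hst hcomm (c t) (by simp [hπs, hcs])
      (fun r hr => by simp [hπt s r hr]) hx

end
end aux

theorem stmt14 [FiniteDimensional K V] (f : V →ₗ[K] V) (hf : IsNilpotent f)
    (i : ℕ) (hi : 1 ≤ i) (hset : {r : ℕ | 1 ≤ r ∧ ulm f r = 1} = {i, i + 1}) :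
    ∀ X : Submodule K V, Chinv f X → Hinv f X := by
  exact aux_main f hf i hset
end

section
/- Let K = GF(2) and f : V → V nilpotent on a finite-dimensional K-vector space. Then every characteristic subspace of V is hyperinvariant if and only if: at most two Ulm invariants of (V, f) are equal to 1, and if exactly two are equal to 1 then they correspond to successive integers (i.e., if d(i) = d(j) = 1 with i < j then j = i + 1). -/
open LinearMap

variable {K : Type*} [Field K] {V : Type*} [AddCommGroup V] [Module K V]

open Polynomial in
theorem aux_decomp_s17 {K : Type*} [Field K] {M : Type*} [AddCommGroup M] [Module K[X] M]
    [Module.Finite K[X] M] (n : ℕ) (hn : ∀ x : M, (X ^ n : K[X]) • x = 0) :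
    ∃ (d : ℕ) (t : Fin d → ℕ) (u : Fin d → M) (P : Fin d → M →ₗ[K[X]] M),
      (∀ x, ∑ p, P p x = x) ∧ (∀ p q x, p ≠ q → P p (P q x) = 0) ∧
      (∀ p x, ∃ a : K[X], P p x = a • u p) ∧ (∀ p, P p (u p) = u p) ∧
      (∀ p (a : K[X]), a • u p = 0 ↔ X ^ t p ∣ a) ∧
      (∀ q w, (X ^ t q : K[X]) • w = 0 →
        ∃ g : M →ₗ[K[X]] M, g (u q) = w ∧ ∀ x, g x = g (P q x)) := by
  obtain ⟨d, t, ⟨e0⟩⟩ := Module.torsion_by_prime_power_decomposition (R := K[X]) (M := M)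
    (p := X) irreducible_X (by
      rw [Submodule.isTorsion'_powers_iff]
      exact fun x => ⟨n, hn x⟩)
  let e := e0.trans (DirectSum.linearEquivFunOnFintype K[X] (Fin d) _)
  let one : ∀ p : Fin d, K[X] ⧸ (Submodule.span K[X] {(X : K[X]) ^ t p}) :=
    fun p => Submodule.Quotient.mk 1
  refine ⟨d, t, fun p => e.symm (Pi.single p (one p)),
    fun p => e.symm.toLinearMap ∘ₗ (LinearMap.single K[X] _ p) ∘ₗ LinearMap.proj p ∘ₗ e.toLinearMap,
    ?_, ?_, ?_, ?_, ?_, ?_⟩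
  · intro x
    apply e.injective
    simp only [map_sum, LinearMap.comp_apply, LinearEquiv.coe_coe, LinearEquiv.apply_symm_apply]
    exact Finset.univ_sum_single (e x)
  · intro p q x h
    simp [Pi.single_eq_of_ne h]
  · intro p x
    obtain ⟨a, ha⟩ := Submodule.Quotient.mk_surjective _ (e x p)
    refine ⟨a, ?_⟩
    apply e.injective
    simp only [LinearMap.comp_apply, LinearEquiv.coe_coe, LinearEquiv.apply_symm_apply, map_smul,
      LinearMap.proj_apply, LinearMap.coe_single]
    rw [← Pi.single_smul, ← ha]
    simp only [one, ← Submodule.Quotient.mk_smul, smul_eq_mul, mul_one]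
  · intro p
    simp
  · intro p a
    rw [← map_smul, LinearEquiv.map_eq_zero_iff, ← Pi.single_smul, Pi.single_eq_zero_iff]
    simp only [one, ← Submodule.Quotient.mk_smul, smul_eq_mul, mul_one,
      Submodule.Quotient.mk_eq_zero]
    exact Ideal.mem_span_singleton
  · intro q w hw
    let h : (K[X] ⧸ (Submodule.span K[X] {(X : K[X]) ^ t q})) →ₗ[K[X]] M :=
      Submodule.liftQ _ (LinearMap.toSpanSingleton K[X] M w) (by
        rw [Submodule.span_singleton_le_iff_mem]
        simpa using hw)
    refine ⟨h ∘ₗ LinearMap.proj q ∘ₗ e.toLinearMap, ?_, ?_⟩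
    · simp only [LinearMap.comp_apply, LinearEquiv.coe_coe, LinearEquiv.apply_symm_apply,
        LinearMap.proj_apply, Pi.single_eq_same, one, h, Submodule.liftQ_apply]
      simp
    · intro x
      simp

open Polynomial in
theorem aux_val_s17 {K : Type*} [Field K] (n : ℕ) (a b : K[X]) :
    (∃ c, X ^ n ∣ a - c * b) ∨ (∃ c, X ^ n ∣ b - c * (X * a)) := by
  have key : ∀ a : K[X], a ≠ 0 → ∃ s a' e, a = X ^ s * a' ∧ X ^ n ∣ 1 - e * a' := by
    intro a ha
    obtain ⟨a', h1, h2⟩ := exists_eq_pow_rootMultiplicity_mul_and_not_dvd a ha 0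
    rw [C_0, sub_zero] at h1 h2
    have : IsCoprime a' (X ^ n) :=
      (IsCoprime.pow_left ((irreducible_X.coprime_iff_not_dvd).2 h2)).symm
    obtain ⟨x, y, hxy⟩ := this
    exact ⟨_, a', x, h1, y, by rw [← hxy]; ring⟩
  by_cases ha : a = 0
  · exact Or.inl ⟨0, by simp [ha]⟩
  by_cases hb : b = 0
  · exact Or.inr ⟨0, by simp [hb]⟩
  obtain ⟨s, a', e, h1, h2⟩ := key a ha
  obtain ⟨r, b', e', h3, h4⟩ := key b hb
  rcases le_or_gt r s with h | h
  · left
    obtain ⟨k, rfl⟩ := Nat.exists_eq_add_of_le h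
    refine ⟨X ^ k * a' * e', ?_⟩
    have : a - X ^ k * a' * e' * b = (1 - e' * b') * a := by rw [h1, h3]; ring
    rw [this]
    exact h4.mul_right _
  · right
    obtain ⟨k, rfl⟩ := Nat.exists_eq_add_of_le (Nat.succ_le_of_lt h)
    refine ⟨X ^ k * b' * e, ?_⟩
    have : b - X ^ k * b' * e * (X * a) = (1 - e * a') * b := by
      rw [h1, h3, Nat.succ_eq_add_one]; ring
    rw [this]
    exact h2.mul_right _

open Polynomial in
theorem aux_core {K : Type*} [Field K] {M : Type*} [AddCommGroup M] [Module K[X] M]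
    {d : ℕ} {t : Fin d → ℕ} {u : Fin d → M} {P : Fin d → M →ₗ[K[X]] M}
    (h1 : ∀ x, ∑ p, P p x = x) (h2 : ∀ p q x, p ≠ q → P p (P q x) = 0)
    (h3 : ∀ p x, ∃ a : K[X], P p x = a • u p) (h4 : ∀ p, P p (u p) = u p)
    (h5 : ∀ p (a : K[X]), a • u p = 0 ↔ X ^ t p ∣ a)
    (h6 : ∀ q w, (X ^ t q : K[X]) • w = 0 →
        ∃ g : M →ₗ[K[X]] M, g (u q) = w ∧ ∀ x, g x = g (P q x))
    (hs : ∀ p q, (0 < t p ∧ ∀ r, t r = t p → r = p) → (∀ r, t r = t q → r = q) →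
      t p < t q → t q = t p + 1)
    (S : Submodule K[X] M)
    (hS : ∀ h : M →ₗ[K[X]] M, (∀ x, h (h x) = 0) → ∀ x ∈ S, h x ∈ S)
    (g : M →ₗ[K[X]] M) (x : M) (hx : x ∈ S) : g x ∈ S := by
  have hoff : ∀ p q, p ≠ q → ∀ g : M →ₗ[K[X]] M, ∀ x ∈ S, P p (g (P q x)) ∈ S := by
    intro p q hpq g x hx
    refine hS (P p ∘ₗ g ∘ₗ P q) ?_ x hx
    intro x
    simp [h2 q p _ hpq.symm]
  have hmap : ∀ p q, p ≠ q → ∀ c : K[X], X ^ t p ∣ X ^ t q * c →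
      ∀ x ∈ S, ∀ a : K[X], P q x = a • u q → (a * c) • u p ∈ S := by
    intro p q hpq c hc x hx a ha
    obtain ⟨g, hg, -⟩ := h6 q (c • u p) (by rw [smul_smul]; exact (h5 _ _).2 hc)
    have := hoff p q hpq g x hx
    rwa [ha, map_smul, map_smul, hg, map_smul, h4, smul_smul] at this
  -- non-single indices
  have hns : ∀ p q, p ≠ q → t p = t q → ∀ x ∈ S, P p x ∈ S := by
    intro p q hpq ht x hx
    obtain ⟨a, ha⟩ := h3 p x
    have m1 := hmap q p hpq.symm 1 (by simp [ht]) x hx a ha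
    rw [mul_one] at m1
    have m2 := hmap p q hpq 1 (by simp [ht]) _ m1 a (by rw [map_smul, h4])
    rwa [mul_one, ← ha] at m2
  have hpair : ∀ p q, t q = t p + 1 → ∀ x ∈ S, P p x + P q x ∈ S → P p x ∈ S ∧ P q x ∈ S := by
    intro p q ht x hx hy
    have hpq : p ≠ q := by rintro rfl; omega
    obtain ⟨a, ha⟩ := h3 p x
    obtain ⟨b, hb⟩ := h3 q x
    have m1 := hmap q p hpq.symm X (by rw [ht, pow_succ]) x hx a ha
    have m2 := hmap p q hpq 1 (by rw [ht, pow_succ]; simp) x hx b hb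
    rw [mul_one] at m2
    rcases aux_val_s17 (t q) a b with ⟨c, hc⟩ | ⟨c, hc⟩
    · have : P p x ∈ S := by
        have e : (a - c * b) • u p = 0 :=
          (h5 _ _).2 ((pow_dvd_pow _ (by omega)).trans hc)
        rw [sub_smul, sub_eq_zero, mul_smul] at e
        rw [ha, e]
        exact S.smul_mem _ m2
      exact ⟨this, (S.add_mem_iff_right this).1 hy⟩
    · have : P q x ∈ S := by
        have e : (b - c * (X * a)) • u q = 0 := (h5 _ _).2 hc
        rw [sub_smul, sub_eq_zero, mul_smul, mul_comm X a] at e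
        rw [hb, e]
        exact S.smul_mem _ m1
      exact ⟨(S.add_mem_iff_left this).1 hy, this⟩
  have hz : ∀ p, t p = 0 → ∀ x, P p x = 0 := by
    intro p hp x
    obtain ⟨a, ha⟩ := h3 p x
    rw [ha, h5, hp]
    simp
  have hP : ∀ p, ∀ x ∈ S, P p x ∈ S := by
    intro p x hx
    by_cases hp0 : t p = 0
    · rw [hz p hp0]; exact S.zero_mem
    by_cases hp : ∃ q, p ≠ q ∧ t p = t q
    · obtain ⟨q, h, h'⟩ := hp
      exact hns p q h h' x hx
    push Not at hp
    have hp' : ∀ r, t r = t p → r = p := fun r hr => by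
      by_contra hne
      exact hp r (Ne.symm hne) hr.symm
    by_cases hq : ∃ q, q ≠ p ∧ t q ≠ 0 ∧ ∀ r, t r = t q → r = q
    · obtain ⟨q, hqp, hq0, hq'⟩ := hq
      have hsum : P p x + P q x ∈ S := by
        have hx' := h1 x
        rw [← Finset.add_sum_erase _ _ (Finset.mem_univ p),
          ← Finset.add_sum_erase _ _ (Finset.mem_erase.2 ⟨hqp, Finset.mem_univ q⟩),
          ← add_assoc] at hx'
        refine (S.add_mem_iff_left ?_).1 (hx' ▸ hx)
        refine S.sum_mem fun r hr => ?_
        simp only [Finset.mem_erase, Finset.mem_univ, and_true] at hr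
        by_cases hr0 : t r = 0
        · rw [hz r hr0]; exact S.zero_mem
        by_cases hr1 : ∃ r', r ≠ r' ∧ t r = t r'
        · obtain ⟨r', h, h'⟩ := hr1
          exact hns r r' h h' x hx
        exfalso
        have hr' : ∀ s, t s = t r → s = r := fun s hs => by
          by_contra hne
          exact hr1 ⟨s, Ne.symm hne, hs.symm⟩
        have n1 : t p ≠ t q := fun h => hqp (hp' q h.symm)
        have n2 : t p ≠ t r := fun h => hr.2 (hp' r h.symm)
        have n3 : t q ≠ t r := fun h => hr.1 (hq' r h.symm)
        have a1 := hs p q ⟨by omega, hp'⟩ hq'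
        have a2 := hs q p ⟨by omega, hq'⟩ hp'
        have a3 := hs p r ⟨by omega, hp'⟩ hr'
        have a4 := hs r p ⟨by omega, hr'⟩ hp'
        have a5 := hs q r ⟨by omega, hq'⟩ hr'
        have a6 := hs r q ⟨by omega, hr'⟩ hq'
        omega
      have n1 : t p ≠ t q := fun h => hqp (hp' q h.symm)
      rcases lt_or_gt_of_ne n1 with h | h
      · exact (hpair p q (hs p q ⟨by omega, hp'⟩ hq' h) x hx hsum).1
      · exact (hpair q p (hs q p ⟨by omega, hq'⟩ hp' h) x hx (by rwa [add_comm])).2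
    · have hx' := h1 x
      rw [← Finset.add_sum_erase _ _ (Finset.mem_univ p)] at hx'
      refine (S.add_mem_iff_left ?_).1 (hx' ▸ hx)
      refine S.sum_mem fun r hr => ?_
      simp only [Finset.mem_erase, Finset.mem_univ, and_true] at hr
      by_cases hr0 : t r = 0
      · rw [hz r hr0]; exact S.zero_mem
      by_cases hr1 : ∃ r', r ≠ r' ∧ t r = t r'
      · obtain ⟨r', h, h'⟩ := hr1
        exact hns r r' h h' x hx
      exfalso
      refine hq ⟨r, hr, hr0, fun s hs => ?_⟩
      by_contra hne
      exact hr1 ⟨s, Ne.symm hne, hs.symm⟩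
  rw [← h1 (g x)]
  refine S.sum_mem fun p _ => ?_
  rw [show g x = g (∑ q, P q x) by rw [h1], map_sum, map_sum]
  refine S.sum_mem fun q _ => ?_
  by_cases hpq : p = q
  · subst hpq
    obtain ⟨a, ha⟩ := h3 p x
    obtain ⟨b, hb⟩ := h3 p (g (u p))
    rw [ha, map_smul, map_smul, hb, smul_comm, ← ha]
    exact S.smul_mem _ (hP p x hx)
  · exact hoff p q hpq g x hx

open Polynomial in
theorem aux_ulm_s17 {K : Type*} [Field K] {V : Type*} [AddCommGroup V] [Module K V]
    [FiniteDimensional K V] (f : V →ₗ[K] V)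
    {d : ℕ} {t : Fin d → ℕ} {u : Fin d → Module.AEval' f}
    {P : Fin d → Module.AEval' f →ₗ[K[X]] Module.AEval' f}
    (h1 : ∀ x, ∑ p, P p x = x)
    (h3 : ∀ p x, ∃ a : K[X], P p x = a • u p) (h4 : ∀ p, P p (u p) = u p)
    (h5 : ∀ p (a : K[X]), a • u p = 0 ↔ X ^ t p ∣ a)
    (p : Fin d) (hp0 : 0 < t p) (hp : ∀ r, t r = t p → r = p) : ulm f (t p) = 1 := by
  obtain ⟨r, hr⟩ : ∃ r, t p = r + 1 := ⟨t p - 1, by omega⟩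
  have hpow : ∀ (n : ℕ) (m : Module.AEval' f), (Module.AEval'.of f).symm ((X ^ n : K[X]) • m) =
      (f ^ n) ((Module.AEval'.of f).symm m) := by
    intro n m
    simp
  set φ := Module.AEval'.of f with hφ
  set x : V := φ.symm ((X ^ r : K[X]) • u p) with hx
  have hxB : x ∉ LinearMap.ker f ⊓ LinearMap.range (f ^ (r + 1)) := by
    rintro ⟨-, y, hy⟩
    have e : (X ^ r : K[X]) • u p = (X ^ (r + 1) : K[X]) • φ y := by
      apply φ.symm.injective
      rw [hpow (r + 1), LinearEquiv.symm_apply_apply, hy]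
    have e2 := congrArg (P p) e
    rw [map_smul, map_smul, h4] at e2
    obtain ⟨a, ha⟩ := h3 p (φ y)
    rw [ha, smul_smul, mul_comm, mul_smul, (h5 p (X ^ (r + 1))).2 (by rw [hr]), smul_zero, h5,
      hr] at e2
    have := (pow_dvd_pow_iff (X_ne_zero (R := K)) not_isUnit_X).1 e2
    omega
  have hA : LinearMap.ker f ⊓ LinearMap.range (f ^ r) =
      (LinearMap.ker f ⊓ LinearMap.range (f ^ (r + 1))) ⊔ Submodule.span K {x} := by
    apply le_antisymm
    · rintro s ⟨hs, y, rfl⟩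
      have hy : (X ^ (r + 1) : K[X]) • φ y = 0 := by
        apply φ.symm.injective
        rw [hpow (r + 1), LinearEquiv.symm_apply_apply, map_zero, pow_succ', Module.End.mul_apply]
        exact hs
      have e : (f ^ r) y = ∑ q, φ.symm ((X ^ r : K[X]) • P q (φ y)) := by
        rw [← map_sum, ← Finset.smul_sum, h1, hpow, LinearEquiv.symm_apply_apply]
      rw [e]
      refine Submodule.sum_mem _ fun q _ => ?_
      obtain ⟨a, ha⟩ := h3 q (φ y)
      have hq : X ^ t q ∣ X ^ (r + 1) * a := by
        rw [← h5, mul_smul, ← ha, ← map_smul, hy, map_zero]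
      rw [ha, smul_smul]
      rcases lt_trichotomy (t q) (t p) with h | h | h
      · rw [(h5 q _).2 (((pow_dvd_pow _ (by omega)).trans (dvd_mul_right _ _))), map_zero]
        exact Submodule.zero_mem _
      · obtain rfl := hp q h
        refine Submodule.mem_sup_right (Submodule.mem_span_singleton.2 ⟨a.coeff 0, ?_⟩)
        rw [hx, ← map_smul]
        congr 1
        rw [← sub_eq_zero, ← Module.AEval.C_smul, smul_smul, ← sub_smul, h5, hr]
        have : C (a.coeff 0) * X ^ r - X ^ r * a = X ^ r * (C (a.coeff 0) - a) := by ring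
        rw [this, pow_succ]
        apply mul_dvd_mul_left
        rw [X_dvd_iff]
        simp
      · refine Submodule.mem_sup_left ⟨?_, ?_⟩
        · rw [SetLike.mem_coe, LinearMap.mem_ker]
          have := hpow 1 ((X ^ r * a) • u q)
          rw [pow_one f] at this
          rw [← this, smul_smul, (h5 q _).2 (by rw [← mul_assoc, ← pow_add, add_comm]; exact hq),
            map_zero]
        · have hXa : X ∣ a := by
            have : X ^ (r + 1) * X ∣ X ^ (r + 1) * a := by
              rw [← pow_succ]; exact (pow_dvd_pow _ (by omega)).trans hq
            exact (mul_dvd_mul_iff_left (pow_ne_zero _ X_ne_zero)).1 this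
          obtain ⟨b, rfl⟩ := hXa
          refine ⟨φ.symm (b • u q), ?_⟩
          rw [← hpow, smul_smul, pow_succ, mul_assoc]
    · apply sup_le
      · refine inf_le_inf_left _ ?_
        rintro _ ⟨y, rfl⟩
        exact ⟨f y, by rw [pow_succ, Module.End.mul_apply]⟩
      · rw [Submodule.span_singleton_le_iff_mem]
        refine ⟨?_, φ.symm (u p), ?_⟩
        · rw [SetLike.mem_coe, LinearMap.mem_ker]
          have := hpow 1 ((X ^ r : K[X]) • u p)
          rw [pow_one f] at this
          rw [hx, ← this, smul_smul, (h5 p _).2 (by rw [← pow_add, add_comm, hr]), map_zero]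
        · rw [hx, hpow]
  unfold ulm
  rw [hr, Nat.add_sub_cancel, hA, Submodule.finrank_sup_span_singleton hxB]
  omega

open Polynomial in
theorem aux_backward {K : Type*} [Field K] {V : Type*} [AddCommGroup V] [Module K V]
    [FiniteDimensional K V] (f : V →ₗ[K] V) (hf : IsNilpotent f)
    (H : ∀ i j : ℕ, 1 ≤ i → ulm f i = 1 → ulm f j = 1 → i < j → j = i + 1)
    (Y : Submodule K V) (hY : Chinv f Y) : Hinv f Y := by
  obtain ⟨n, hn⟩ := hf
  obtain ⟨d, t, u, P, h1, h2, h3, h4, h5, h6⟩ := aux_decomp_s17 (K := K) (M := Module.AEval' f) n (by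
    intro x
    apply (Module.AEval'.of f).symm.injective
    simp [hn])
  intro g hg
  have hinv : Y ∈ (Algebra.lsmul K K V f).invtSubmodule := by
    intro y hy
    exact hY.1 (Submodule.mem_map_of_mem hy)
  let S : Submodule K[X] (Module.AEval' f) := Module.AEval.mapSubmodule K V f ⟨Y, hinv⟩
  have hSm : ∀ m : Module.AEval' f, m ∈ S ↔ (Module.AEval'.of f).symm m ∈ Y := by
    intro m
    exact Module.AEval.mem_mapSubmodule_apply K V f
  let G : Module.AEval' f →ₗ[K[X]] Module.AEval' f :=
    LinearMap.ofAEval f ((Module.AEval'.of f).toLinearMap ∘ₗ g) (by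
      intro m
      have := LinearMap.congr_fun hg m
      simp only [LinearMap.comp_apply] at this
      simp only [LinearMap.comp_apply, LinearEquiv.coe_coe, Module.End.smul_def, this]
      exact (Module.AEval'.X_smul_of f (g m)).symm)
  rintro _ ⟨y, hy, rfl⟩
  have := aux_core h1 h2 h3 h4 h5 h6 ?_ S ?_ G (Module.AEval'.of f y) ((hSm _).2 hy)
  · exact (hSm _).1 this
  · intro p q hp hq hlt
    exact H _ _ hp.1 (aux_ulm_s17 f h1 h3 h4 h5 p hp.1 hp.2)
      (aux_ulm_s17 f h1 h3 h4 h5 q (by omega) hq) hlt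
  · intro h hh x hx
    let φ := Module.AEval'.of f
    let h' : V →ₗ[K] V := φ.symm.toLinearMap ∘ₗ (h.restrictScalars K) ∘ₗ φ.toLinearMap
    have hh' : ∀ v, h' (h' v) = 0 := by
      intro v
      simp [h', hh]
    have hc : ∀ v, h' (f v) = f (h' v) := by
      intro v
      have e1 := Module.AEval'.X_smul_of f v
      simp only [h', φ, LinearMap.comp_apply, LinearEquiv.coe_coe, LinearMap.restrictScalars_apply]
      rw [← e1, map_smul, Module.AEval'.of_symm_X_smul]
    let α : V ≃ₗ[K] V := LinearEquiv.ofLinearMap (LinearMap.id + h') (LinearMap.id - h')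
      (by ext v; simp [hh']) (by ext v; simp [hh'])
    have hα := hY.2 α (by ext v; simp [α, hc])
    rw [hSm] at hx ⊢
    have : α (φ.symm x) ∈ Y := hα ▸ Submodule.mem_map_of_mem hx
    have e : α (φ.symm x) = φ.symm x + φ.symm (h x) := by
      simp [α, h']
    rw [e] at this
    exact (Y.add_mem_iff_right hx).1 this

theorem aux_one {V : Type*} [AddCommGroup V] [Module (ZMod 2) V]
    [FiniteDimensional (ZMod 2) V] (f : V →ₗ[ZMod 2] V) (i : ℕ) (h : ulm f (i + 1) = 1) :
    (∃ u, (f ^ (i + 1)) u = 0 ∧ (f ^ i) u ∉ LinearMap.range (f ^ (i + 1))) ∧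
    ∀ x y, (f ^ (i + 1)) x = 0 → (f ^ (i + 1)) y = 0 →
      (f ^ i) x ∉ LinearMap.range (f ^ (i + 1)) → (f ^ i) y ∉ LinearMap.range (f ^ (i + 1)) →
      (f ^ i) (x + y) ∈ LinearMap.range (f ^ (i + 1)) := by
  have hp : ∀ x, (f ^ (i + 1)) x = f ((f ^ i) x) := fun x => by
    rw [pow_succ', Module.End.mul_apply]
  unfold ulm at h
  rw [Nat.add_sub_cancel] at h
  set A := LinearMap.ker f ⊓ LinearMap.range (f ^ i) with hA
  set B := LinearMap.ker f ⊓ LinearMap.range (f ^ (i + 1)) with hB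
  have hBA : B ≤ A := by
    refine inf_le_inf_left _ ?_
    rintro _ ⟨y, rfl⟩
    exact ⟨f y, by rw [pow_succ, Module.End.mul_apply]⟩
  have hnot : ¬ A ≤ B := fun hle => by
    have := Submodule.finrank_mono hle
    omega
  obtain ⟨s, hsA, hsB⟩ := SetLike.not_le_iff_exists.1 hnot
  have hsup : B ⊔ Submodule.span (ZMod 2) {s} = A := by
    apply Submodule.eq_of_le_of_finrank_eq
    · exact sup_le hBA (by rwa [Submodule.span_singleton_le_iff_mem])
    · rw [Submodule.finrank_sup_span_singleton hsB]; omega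
  have hmem : ∀ x, (f ^ (i + 1)) x = 0 → (f ^ i) x ∉ LinearMap.range (f ^ (i + 1)) →
      ∃ b ∈ B, (f ^ i) x = b + s := by
    intro x hx hxn
    have : (f ^ i) x ∈ B ⊔ Submodule.span (ZMod 2) {s} := by
      rw [hsup]
      exact ⟨by rw [SetLike.mem_coe, LinearMap.mem_ker, ← hp]; exact hx, x, rfl⟩
    obtain ⟨b, hb, c, hc, e⟩ := Submodule.mem_sup.1 this
    obtain ⟨k, rfl⟩ := Submodule.mem_span_singleton.1 hc
    obtain rfl | rfl : k = 0 ∨ k = 1 :=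
      (by decide : ∀ k : ZMod 2, k = 0 ∨ k = 1) k
    · exfalso
      rw [zero_smul, add_zero] at e
      exact hxn (e ▸ hb.2)
    · exact ⟨b, hb, by rw [← e, one_smul]⟩
  constructor
  · obtain ⟨hs1, u, rfl⟩ := hsA
    exact ⟨u, by rw [hp]; exact hs1, fun hu => hsB ⟨hs1, hu⟩⟩
  · intro x y hx hy hxn hyn
    obtain ⟨b, hb, e⟩ := hmem x hx hxn
    obtain ⟨b', hb', e'⟩ := hmem y hy hyn
    have : (f ^ i) (x + y) = b + b' := by
      rw [map_add, e, e', add_add_add_comm, ZModModule.add_self, add_zero]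
    rw [this]
    exact Submodule.add_mem _ hb.2 hb'.2

theorem aux_hinv_ker {K : Type*} [Field K] {V : Type*} [AddCommGroup V] [Module K V]
    (f : V →ₗ[K] V) (n : ℕ) : Hinv f (LinearMap.ker (f ^ n)) := by
  rintro g hg _ ⟨x, hx, rfl⟩
  have hc : Commute g (f ^ n) := Commute.pow_right hg n
  have := LinearMap.congr_fun hc.eq x
  rw [Module.End.mul_apply, Module.End.mul_apply] at this
  rw [SetLike.mem_coe, LinearMap.mem_ker] at hx
  rw [LinearMap.mem_ker, ← this, hx, map_zero]

theorem aux_hinv_map {K : Type*} [Field K] {V : Type*} [AddCommGroup V] [Module K V]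
    (f : V →ₗ[K] V) (Y : Submodule K V) (hY : Hinv f Y) : Hinv f (Y.map f) := by
  rintro g hg _ ⟨_, ⟨x, hx, rfl⟩, rfl⟩
  refine ⟨g x, hY g hg ⟨x, hx, rfl⟩, ?_⟩
  exact (LinearMap.congr_fun hg x).symm

theorem aux_hinv_sup {K : Type*} [Field K] {V : Type*} [AddCommGroup V] [Module K V]
    (f : V →ₗ[K] V) (Y Z : Submodule K V) (hY : Hinv f Y) (hZ : Hinv f Z) : Hinv f (Y ⊔ Z) := by
  intro g hg
  rw [Submodule.map_sup]
  exact sup_le_sup (hY g hg) (hZ g hg)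

/-- The endomorphism commuting with `f` attached to a functional `l` and a vector `w`. -/
theorem aux_endo {K : Type*} [Field K] {V : Type*} [AddCommGroup V] [Module K V]
    (f : V →ₗ[K] V) (i : ℕ) (l : V →ₗ[K] K) (hl : ∀ x, l ((f ^ (i + 1)) x) = 0) (w : V)
    (hw : (f ^ (i + 1)) w = 0) :
    ∃ g : V →ₗ[K] V, g ∘ₗ f = f ∘ₗ g ∧
      ∀ x, ∃ y, g x = l ((f ^ i) x) • w + f y ∧ (f ^ (i + 1)) y = 0 := by
  refine ⟨∑ a ∈ Finset.range (i + 1), (l ∘ₗ (f ^ (i - a))).smulRight ((f ^ a) w), ?_, ?_⟩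
  · ext x
    simp only [LinearMap.comp_apply, LinearMap.sum_apply, LinearMap.smulRight_apply, map_sum,
      map_smul]
    rw [Finset.sum_range_succ', Finset.sum_range_succ]
    have e1 : l ((f ^ (i - 0)) (f x)) = 0 := by
      rw [Nat.sub_zero, ← Module.End.mul_apply, ← pow_succ]; exact hl x
    have e2 : f ((f ^ i) w) = 0 := by
      rw [← Module.End.mul_apply, ← pow_succ']; exact hw
    rw [e1, e2, zero_smul, smul_zero, add_zero, add_zero]
    refine Finset.sum_congr rfl fun a ha => ?_
    rw [Finset.mem_range] at ha
    rw [← Module.End.mul_apply, ← pow_succ, ← Module.End.mul_apply f, ← pow_succ',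
      show i - (a + 1) + 1 = i - a by omega]
  · intro x
    refine ⟨∑ a ∈ Finset.range i, l ((f ^ (i - (a + 1))) x) • (f ^ a) w, ?_, ?_⟩
    · simp only [LinearMap.comp_apply, LinearMap.sum_apply, LinearMap.smulRight_apply, map_sum,
        map_smul]
      rw [Finset.sum_range_succ', add_comm, Nat.sub_zero, pow_zero, Module.End.one_apply]
      congr 1
      refine Finset.sum_congr rfl fun a ha => ?_
      rw [pow_succ', Module.End.mul_apply]
    · rw [map_sum]
      refine Finset.sum_eq_zero fun a _ => ?_
      rw [map_smul, ← Module.End.mul_apply, ← pow_add, add_comm (i + 1) a, pow_add, Module.End.mul_apply, hw,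
        map_zero, smul_zero]

theorem aux_pow_zero {K : Type*} [Field K] {V : Type*} [AddCommGroup V] [Module K V]
    (f : V →ₗ[K] V) {n m : ℕ} (h : n ≤ m) {x : V} (hx : (f ^ n) x = 0) : (f ^ m) x = 0 := by
  obtain ⟨k, rfl⟩ := Nat.exists_eq_add_of_le h
  rw [add_comm, pow_add, Module.End.mul_apply, hx, map_zero]

theorem aux_forward {V : Type*} [AddCommGroup V] [Module (ZMod 2) V]
    [FiniteDimensional (ZMod 2) V] (f : V →ₗ[ZMod 2] V) (i m : ℕ) (him : i + 1 ≤ m)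
    (hi : ulm f (i + 1) = 1) (hm : ulm f (m + 1 + 1) = 1) :
    ∃ Y : Submodule (ZMod 2) V, Chinv f Y ∧ ¬ Hinv f Y := by
  have hp : ∀ n x, (f ^ (n + 1)) x = (f ^ n) (f x) := fun n x => by
    rw [pow_succ, Module.End.mul_apply]
  have hp' : ∀ n x, f ((f ^ n) x) = (f ^ n) (f x) := fun n x => by
    rw [← Module.End.mul_apply, ← Module.End.mul_apply, ← pow_succ, ← pow_succ']
  obtain ⟨⟨u, hu0, hu1⟩, hu2⟩ := aux_one f i hi
  obtain ⟨⟨v, hv0, hv1⟩, hv2⟩ := aux_one f (m + 1) hm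
  set A := (LinearMap.ker (f ^ (m + 2))).map f ⊔ LinearMap.ker (f ^ (i + 1)) with hA
  set B := (LinearMap.ker (f ^ (m + 2))).map f ⊔ LinearMap.ker (f ^ i) with hB
  set C := ((LinearMap.ker (f ^ (m + 3))).map f).map f ⊔ (LinearMap.ker (f ^ (m + 1))).map f ⊔
    LinearMap.ker (f ^ (i + 1)) with hC
  have mA : ∀ a, a ∈ A ↔ ∃ y c, (f ^ (m + 2)) y = 0 ∧ (f ^ (i + 1)) c = 0 ∧ f y + c = a := by
    intro a
    rw [hA, Submodule.mem_sup]
    constructor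
    · rintro ⟨_, ⟨y, hy, rfl⟩, c, hc, h⟩
      exact ⟨y, c, hy, hc, h⟩
    · rintro ⟨y, c, hy, hc, h⟩
      exact ⟨_, ⟨y, hy, rfl⟩, c, hc, h⟩
  have mB : ∀ a, a ∈ B ↔ ∃ y c, (f ^ (m + 2)) y = 0 ∧ (f ^ i) c = 0 ∧ f y + c = a := by
    intro a
    rw [hB, Submodule.mem_sup]
    constructor
    · rintro ⟨_, ⟨y, hy, rfl⟩, c, hc, h⟩
      exact ⟨y, c, hy, hc, h⟩
    · rintro ⟨y, c, hy, hc, h⟩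
      exact ⟨_, ⟨y, hy, rfl⟩, c, hc, h⟩
  have mC : ∀ a, a ∈ C ↔ ∃ y z c, (f ^ (m + 3)) y = 0 ∧ (f ^ (m + 1)) z = 0 ∧
      (f ^ (i + 1)) c = 0 ∧ f (f y) + f z + c = a := by
    intro a
    rw [hC, Submodule.mem_sup]
    constructor
    · rintro ⟨w, hw, c, hc, h⟩
      obtain ⟨_, ⟨_, ⟨y, hy, rfl⟩, rfl⟩, _, ⟨z, hz, rfl⟩, rfl⟩ := Submodule.mem_sup.1 hw
      exact ⟨y, z, c, hy, hz, hc, h⟩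
    · rintro ⟨y, z, c, hy, hz, hc, h⟩
      exact ⟨_, Submodule.mem_sup.2 ⟨_, ⟨_, ⟨y, hy, rfl⟩, rfl⟩, _, ⟨z, hz, rfl⟩, rfl⟩, c, hc, h⟩
  have iA : Hinv f A := aux_hinv_sup _ _ _ (aux_hinv_map _ _ (aux_hinv_ker _ _)) (aux_hinv_ker _ _)
  have iB : Hinv f B := aux_hinv_sup _ _ _ (aux_hinv_map _ _ (aux_hinv_ker _ _)) (aux_hinv_ker _ _)
  have iC : Hinv f C := aux_hinv_sup _ _ _ (aux_hinv_sup _ _ _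
    (aux_hinv_map _ _ (aux_hinv_map _ _ (aux_hinv_ker _ _)))
    (aux_hinv_map _ _ (aux_hinv_ker _ _))) (aux_hinv_ker _ _)
  -- membership criteria
  have cB : ∀ y c, (f ^ (m + 2)) y = 0 → (f ^ (i + 1)) c = 0 →
      (f ^ i) c ∈ LinearMap.range (f ^ (i + 1)) → f y + c ∈ B := by
    rintro y c hy hc ⟨w, hw⟩
    rw [mB]
    refine ⟨y + w, c - f w, ?_, ?_, ?_⟩
    · rw [map_add, hy, zero_add]
      apply aux_pow_zero f (n := i + 1 + 1) (by omega)
      rw [hp, ← hp', hw, hp', ← hp, hc]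
    · rw [map_sub, ← hp, hw, sub_self]
    · rw [map_add]; abel
  have cC : ∀ y c, (f ^ (m + 2)) y = 0 → (f ^ (i + 1)) c = 0 →
      (f ^ (m + 1)) y ∈ LinearMap.range (f ^ (m + 1 + 1)) → f y + c ∈ C := by
    rintro y c hy hc ⟨w, hw⟩
    rw [mC]
    refine ⟨w, y - f w, c, ?_, ?_, hc, ?_⟩
    · rw [hp, ← hp', hw, hp', ← hp, hy]
    · rw [map_sub, ← hp, hw, sub_self]
    · rw [map_sub]; abel
  have dB : ∀ a ∈ A, ∀ b ∈ A, a ∉ B → b ∉ B → a + b ∈ B := by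
    intro a ha b hb haB hbB
    obtain ⟨y, c, hy, hc, rfl⟩ := (mA a).1 ha
    obtain ⟨y', c', hy', hc', rfl⟩ := (mA b).1 hb
    have := hu2 c c' hc hc' (fun h => haB (cB _ _ hy hc h)) (fun h => hbB (cB _ _ hy' hc' h))
    have := cB (y + y') (c + c') (by rw [map_add, hy, hy', add_zero])
      (by rw [map_add, hc, hc', add_zero]) this
    rwa [map_add, add_add_add_comm] at this
  have dC : ∀ a ∈ A, ∀ b ∈ A, a ∉ C → b ∉ C → a + b ∈ C := by
    intro a ha b hb haB hbB
    obtain ⟨y, c, hy, hc, rfl⟩ := (mA a).1 ha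
    obtain ⟨y', c', hy', hc', rfl⟩ := (mA b).1 hb
    have := hv2 y y' hy hy' (fun h => haB (cC _ _ hy hc h)) (fun h => hbB (cC _ _ hy' hc' h))
    have := cC (y + y') (c + c') (by rw [map_add, hy, hy', add_zero])
      (by rw [map_add, hc, hc', add_zero]) this
    rwa [map_add, add_add_add_comm] at this
  have fA : ∀ a ∈ A, f a ∈ A ∧ f a ∈ B ∧ f a ∈ C := by
    intro a ha
    refine ⟨iA f rfl ⟨a, ha, rfl⟩, ?_, ?_⟩
    · obtain ⟨y, c, hy, hc, rfl⟩ := (mA a).1 ha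
      rw [mB]
      refine ⟨f y + c, 0, ?_, by simp, by simp⟩
      rw [map_add, ← hp', hy, map_zero, zero_add]
      exact aux_pow_zero f (by omega) hc
    · obtain ⟨y, c, hy, hc, rfl⟩ := (mA a).1 ha
      rw [mC]
      refine ⟨y, c, 0, aux_pow_zero f (by omega) hy, aux_pow_zero f (by omega) hc, by simp,
        by simp⟩
  let Y : Submodule (ZMod 2) V :=
    { carrier := {a | a ∈ A ∧ (a ∈ B ↔ a ∈ C)}
      zero_mem' := ⟨A.zero_mem, by simp⟩
      add_mem' := by
        rintro a b ⟨ha, ha'⟩ ⟨hb, hb'⟩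
        refine ⟨A.add_mem ha hb, ?_⟩
        by_cases h1 : a ∈ B <;> by_cases h2 : b ∈ B
        · exact iff_of_true (B.add_mem h1 h2) (C.add_mem (ha'.1 h1) (hb'.1 h2))
        · rw [B.add_mem_iff_right h1, C.add_mem_iff_right (ha'.1 h1), hb']
        · rw [B.add_mem_iff_left h2, C.add_mem_iff_left (hb'.1 h2), ha']
        · exact iff_of_true (dB a ha b hb h1 h2)
            (dC a ha b hb (fun h => h1 (ha'.2 h)) (fun h => h2 (hb'.2 h)))
      smul_mem' := by
        intro k a ha
        obtain rfl | rfl := (by decide : ∀ k : ZMod 2, k = 0 ∨ k = 1) k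
        · rw [zero_smul]; exact ⟨A.zero_mem, by simp⟩
        · rwa [one_smul] }
  have mY : ∀ a, a ∈ Y ↔ a ∈ A ∧ (a ∈ B ↔ a ∈ C) := fun a => Iff.rfl
  have keyα : ∀ α : V ≃ₗ[ZMod 2] V,
      (α : V →ₗ[ZMod 2] V) ∘ₗ f = f ∘ₗ (α : V →ₗ[ZMod 2] V) →
      (α.symm : V →ₗ[ZMod 2] V) ∘ₗ f = f ∘ₗ (α.symm : V →ₗ[ZMod 2] V) := by
    intro α h
    ext x
    have := LinearMap.congr_fun h (α.symm x)
    simp only [LinearMap.comp_apply, LinearEquiv.coe_coe, LinearEquiv.apply_symm_apply] at this ⊢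
    rw [← this, LinearEquiv.symm_apply_apply]
  have keyY : ∀ α : V ≃ₗ[ZMod 2] V,
      (α : V →ₗ[ZMod 2] V) ∘ₗ f = f ∘ₗ (α : V →ₗ[ZMod 2] V) → ∀ x ∈ Y, α x ∈ Y := by
    intro α h x hx
    have gen : ∀ Z : Submodule (ZMod 2) V, Hinv f Z → (α x ∈ Z ↔ x ∈ Z) := by
      intro Z hZ
      constructor
      · intro hz
        have := hZ _ (keyα α h) ⟨α x, hz, rfl⟩
        simpa using this
      · intro hz
        exact hZ _ h ⟨x, hz, rfl⟩
    rw [mY] at hx ⊢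
    rwa [gen A iA, gen B iB, gen C iC]
  refine ⟨Y, ⟨?_, ?_⟩, ?_⟩
  · rintro _ ⟨a, ha, rfl⟩
    obtain ⟨h1, h2, h3⟩ := fA a ha.1
    exact ⟨h1, iff_of_true h2 h3⟩
  · intro α h
    apply le_antisymm
    · rintro _ ⟨a, ha, rfl⟩
      exact keyY α h a ha
    · intro a ha
      exact ⟨α.symm a, keyY α.symm (keyα α h) a ha, by simp⟩
  · intro hY
    have uA : u ∈ A := (mA u).2 ⟨0, u, by simp, hu0, by simp⟩
    have uC : u ∈ C := (mC u).2 ⟨0, 0, u, by simp, by simp, hu0, by simp⟩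
    have uB : u ∉ B := by
      rw [mB]
      rintro ⟨y, c, hy, hc, rfl⟩
      apply hu1
      rw [map_add, hc, add_zero, ← hp]
      exact ⟨y, rfl⟩
    have vA : f v ∈ A := (mA _).2 ⟨v, 0, hv0, by simp, by simp⟩
    have vB : f v ∈ B := (mB _).2 ⟨v, 0, hv0, by simp, by simp⟩
    have vC : f v ∉ C := by
      rw [mC]
      rintro ⟨y, z, c, hy, hz, hc, h⟩
      apply hv1
      rw [hp, ← h, map_add, map_add, ← hp, ← hp, ← hp, hz, aux_pow_zero f (by omega) hc]
      exact ⟨y, by simp⟩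
    have hz : u + f v ∈ Y := by
      rw [mY]
      refine ⟨A.add_mem uA vA, iff_of_false ?_ ?_⟩
      · rwa [B.add_mem_iff_left vB]
      · rwa [C.add_mem_iff_right uC]
    obtain ⟨l0, hl0, hl1⟩ := Submodule.exists_le_ker_of_notMem hu1
    have hl1' : l0 ((f ^ i) u) = 1 :=
      ((by decide : ∀ k : ZMod 2, k = 0 ∨ k = 1) _).resolve_left hl0
    obtain ⟨g, hg, hg'⟩ := aux_endo f i l0 (fun x => hl1 ⟨x, rfl⟩) u hu0
    obtain ⟨y, hy, hy0⟩ := hg' (u + f v)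
    have hlv : l0 ((f ^ i) (f v)) = 0 := by rw [← hp]; exact hl1 ⟨v, rfl⟩
    rw [map_add (f ^ i), map_add l0, hl1', hlv, add_zero, one_smul] at hy
    have hgz : u + f y ∈ Y := hy ▸ hY g hg ⟨_, hz, rfl⟩
    have yA : y ∈ A := (mA _).2 ⟨0, y, by simp, hy0, by simp⟩
    obtain ⟨-, y2, y3⟩ := fA y yA
    rw [mY] at hgz
    rw [B.add_mem_iff_left y2, C.add_mem_iff_left y3] at hgz
    exact uB (hgz.2.2 uC)

theorem stmt17 {V : Type*} [AddCommGroup V] [Module (ZMod 2) V]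
    [FiniteDimensional (ZMod 2) V] (f : V →ₗ[ZMod 2] V) (hf : IsNilpotent f) :
    (∀ X : Submodule (ZMod 2) V, Chinv f X → Hinv f X) ↔
      (∀ i j : ℕ, 1 ≤ i → ulm f i = 1 → ulm f j = 1 → i < j → j = i + 1) := by
  constructor
  · intro H i j h1 hi hj hij
    by_contra hne
    obtain ⟨i, rfl⟩ := Nat.exists_eq_add_of_le' h1
    obtain ⟨m, rfl⟩ := Nat.exists_eq_add_of_le' (show 2 ≤ j by omega)
    obtain ⟨Y, hY, hY'⟩ := aux_forward f i m (by omega) hi hj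
    exact hY' (H Y hY)
  · intro H X hX
    exact aux_backward f hf H X hX
end

section
/- Let K = GF(2) and f : V → V nilpotent. There exists a characteristic subspace of V that is not hyperinvariant if and only if for some integers r, s with s > r + 1, the Jordan form of f contains exactly one Jordan block of size s and exactly one Jordan block of size r. -/
open LinearMap

variable {K : Type*} [Field K] {V : Type*} [AddCommGroup V] [Module K V]

section rev
variable {V : Type*} [AddCommGroup V] [Module (ZMod 2) V] [FiniteDimensional (ZMod 2) V]

theorem comm_pow_app {K V : Type*} [Field K] [AddCommGroup V] [Module K V]
    {f g : V →ₗ[K] V} (h : g ∘ₗ f = f ∘ₗ g) (n : ℕ) (v : V) :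
    g ((f ^ n) v) = (f ^ n) (g v) := by
  have hc : Commute g f := h
  have := (hc.pow_right n).eq
  exact LinearMap.congr_fun this v

theorem pow_app_add {K V : Type*} [Field K] [AddCommGroup V] [Module K V]
    (f : V →ₗ[K] V) (m n : ℕ) (v : V) : (f ^ m) ((f ^ n) v) = (f ^ (m + n)) v := by
  rw [pow_add]; rfl

theorem ulm_one (f : V →ₗ[ZMod 2] V) (r : ℕ) (hr : 1 ≤ r) (h : ulm f r = 1) :
    ∃ x, (f ^ r) x = 0 ∧ (f ^ (r - 1)) x ∉ LinearMap.range (f ^ r) ∧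
      ∀ w, (f ^ r) w = 0 → (f ^ (r - 1)) w ∈ LinearMap.range (f ^ r) ∨
        (f ^ (r - 1)) (w - x) ∈ LinearMap.range (f ^ r) := by
  obtain ⟨r, rfl⟩ : ∃ k, r = k + 1 := ⟨r - 1, by omega⟩
  simp only [ulm, Nat.add_sub_cancel] at h ⊢
  set A := LinearMap.ker f ⊓ LinearMap.range (f ^ r) with hA
  set B := LinearMap.ker f ⊓ LinearMap.range (f ^ (r + 1)) with hB
  replace h : Module.finrank (ZMod 2) A - Module.finrank (ZMod 2) B = 1 := h
  have hBA : B ≤ A := by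
    rintro v ⟨h1, ⟨w, rfl⟩⟩
    exact ⟨h1, ⟨f w, by rw [pow_succ]; rfl⟩⟩
  have hne : ¬ A ≤ B := by
    intro hle
    have := le_antisymm hle hBA
    rw [this] at h; omega
  obtain ⟨z, hzA, hzB⟩ := SetLike.not_le_iff_exists.1 hne
  have hlt : B < B ⊔ Submodule.span (ZMod 2) {z} := by
    refine lt_of_le_of_ne le_sup_left ?_
    intro he
    exact hzB (he ▸ (le_sup_right : _ ≤ B ⊔ _) (Submodule.mem_span_singleton_self z))
  have hle : B ⊔ Submodule.span (ZMod 2) {z} ≤ A := by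
    refine sup_le hBA ?_
    rw [Submodule.span_singleton_le_iff_mem]; exact hzA
  have h1 := Submodule.finrank_lt_finrank_of_lt hlt
  have heq : B ⊔ Submodule.span (ZMod 2) {z} = A :=
    Submodule.eq_of_le_of_finrank_le hle (by omega)
  obtain ⟨hz1, ⟨x, hx⟩⟩ := id hzA
  have key : ∀ w, (f ^ (r + 1)) w = f ((f ^ r) w) := fun w => by rw [pow_succ']; rfl
  refine ⟨x, ?_, ?_, ?_⟩
  · rw [key, hx]; exact hz1
  · intro hh; rw [hx] at hh; exact hzB ⟨hz1, hh⟩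
  · intro w hw
    have hwA : (f ^ r) w ∈ A := ⟨LinearMap.mem_ker.2 (by rw [← key, hw]), ⟨w, rfl⟩⟩
    rw [← heq] at hwA
    obtain ⟨b, hb, c, hc, hbc⟩ := Submodule.mem_sup.1 hwA
    obtain ⟨k, rfl⟩ := Submodule.mem_span_singleton.1 hc
    have hk : k = 0 ∨ k = 1 := (by decide : ∀ k : ZMod 2, k = 0 ∨ k = 1) k
    rcases hk with rfl | rfl
    · left; rw [← hbc]; simpa using hb.2
    · right; rw [map_sub, ← hbc, hx]; simpa using hb.2

theorem auto_move (f : V →ₗ[ZMod 2] V) (r : ℕ) (hr : 1 ≤ r) (x : V)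
    (h1 : (f ^ r) x = 0) (h2 : (f ^ (r - 1)) x ∉ LinearMap.range (f ^ r))
    (h3 : ∀ w, (f ^ r) w = 0 → (f ^ (r - 1)) w ∈ LinearMap.range (f ^ r) ∨
        (f ^ (r - 1)) (w - x) ∈ LinearMap.range (f ^ r))
    (α : V ≃ₗ[ZMod 2] V)
    (hα : (α : V →ₗ[ZMod 2] V) ∘ₗ f = f ∘ₗ (α : V →ₗ[ZMod 2] V)) :
    ∃ a c, (f ^ (r - 1)) a = 0 ∧ (f ^ (r + 1)) c = 0 ∧ α x = x + a + f c := by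
  have hp := comm_pow_app hα
  simp only [LinearEquiv.coe_coe] at hp
  have h4 : (f ^ r) (α x) = 0 := by rw [← hp, h1, map_zero]
  rcases h3 (α x) h4 with h | ⟨c, hc⟩
  · exfalso
    obtain ⟨c, hc⟩ := h
    apply h2
    refine ⟨α.symm c, ?_⟩
    apply α.injective
    rw [hp, hp, α.apply_symm_apply, hc]
  · obtain ⟨k, rfl⟩ : ∃ k, r = k + 1 := ⟨r - 1, by omega⟩
    simp only [Nat.add_sub_cancel] at *
    have e1 : (f ^ k) (f c) = (f ^ (k + 1)) c := by rw [pow_succ]; rfl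
    have e2 : ∀ w, (f ^ (k + 1)) w = f ((f ^ k) w) := fun w => by rw [pow_succ']; rfl
    have e3 : ∀ w, (f ^ (k + 1 + 1)) w = f ((f ^ (k + 1)) w) := fun w => by
      rw [pow_succ' f (k + 1)]; rfl
    refine ⟨α x - x - f c, c, ?_, ?_, by abel⟩
    · rw [map_sub, e1, hc, sub_self]
    · rw [e3, hc, ← e2, map_sub, h4, h1, sub_self]

theorem proj_exists {K V : Type*} [Field K] [AddCommGroup V] [Module K V]
    (f : V →ₗ[K] V) (r : ℕ) (x : V) (h1 : (f ^ (r + 1)) x = 0)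
    (h2 : (f ^ r) x ∉ LinearMap.range (f ^ (r + 1))) :
    ∃ g : V →ₗ[K] V, g ∘ₗ f = f ∘ₗ g ∧ (∃ a, g x = x + f a ∧ (f ^ r) (f a) = 0) ∧
      ∀ y, ∃ a, g (f y) = f a ∧ (f ^ r) (f a) = 0 := by
  obtain ⟨φ, hφ1, hφ2⟩ := Submodule.exists_le_ker_of_notMem h2
  have hφ0 : ∀ w, φ ((f ^ (r + 1)) w) = 0 := fun w => hφ2 ⟨w, rfl⟩
  set c := φ ((f ^ r) x) with hc
  let g : V →ₗ[K] V := c⁻¹ • ∑ i ∈ Finset.range (r + 1),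
    (φ ∘ₗ (f ^ (r - i))).smulRight ((f ^ i) x)
  have hg : ∀ v, g v = c⁻¹ • ∑ i ∈ Finset.range (r + 1), φ ((f ^ (r - i)) v) • (f ^ i) x := by
    intro v; simp [g, LinearMap.sum_apply]
  have hs : ∀ (i : ℕ) v, f ((f ^ i) v) = (f ^ (i + 1)) v := fun i w => by rw [pow_succ']; rfl
  have hs' : ∀ (i : ℕ) v, (f ^ i) (f v) = (f ^ (i + 1)) v := fun i w => by rw [pow_succ]; rfl
  have hcomm : ∀ v, g (f v) = f (g v) := by
    intro v
    rw [hg, hg, map_smul, map_sum]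
    congr 1
    rw [Finset.sum_range_succ', Finset.sum_range_succ]
    simp only [map_smul, hs, h1, smul_zero, add_zero, Nat.sub_zero, hs', hφ0, zero_smul]
    refine Finset.sum_congr rfl fun i hi => ?_
    have : r - (i + 1) + 1 = r - i := by have := Finset.mem_range.1 hi; omega
    rw [this]
  refine ⟨g, LinearMap.ext hcomm, ?_, fun y => ⟨g y, hcomm y, ?_⟩⟩
  · refine ⟨c⁻¹ • ∑ i ∈ Finset.range r, φ ((f ^ (r - (i + 1))) x) • (f ^ i) x, ?_, ?_⟩
    · rw [hg, Finset.sum_range_succ', map_smul, map_sum, smul_add, add_comm]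
      congr 1
      · simp only [Nat.sub_zero, pow_zero, Module.End.one_apply, ← hc]
        rw [smul_smul, inv_mul_cancel₀ hφ1, one_smul]
      · simp only [map_smul, hs]
    · rw [hs', map_smul, map_sum]
      simp only [map_smul, pow_app_add, add_comm (r + 1)]
      simp only [← pow_app_add, h1, map_zero, smul_zero, Finset.sum_const_zero]
  · rw [hs', hg, map_smul, map_sum]
    simp only [map_smul, pow_app_add, add_comm (r + 1)]
    simp only [← pow_app_add, h1, map_zero, smul_zero, Finset.sum_const_zero]

theorem rev_dir (f : V →ₗ[ZMod 2] V) (r s : ℕ) (hr : 1 ≤ r) (hrs : r + 1 < s)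
    (hs : ulm f s = 1) (hur : ulm f r = 1) :
    ∃ X : Submodule (ZMod 2) V, Chinv f X ∧ ¬ Hinv f X := by
  obtain ⟨x, x1, x2, x3⟩ := ulm_one f r hr hur
  obtain ⟨y, y1, y2, y3⟩ := ulm_one f s (by omega) hs
  have hmono : ∀ m n, m ≤ n → ∀ v, (f ^ m) v = 0 → (f ^ n) v = 0 := by
    intro m n hmn v hv
    obtain ⟨k, rfl⟩ := Nat.exists_eq_add_of_le hmn
    rw [add_comm, ← pow_app_add, hv, map_zero]
  have hf' : ∀ (i : ℕ) v, (f ^ i) (f v) = (f ^ (i + 1)) v := fun i w => by rw [pow_succ]; rfl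
  set Z : Submodule (ZMod 2) V := LinearMap.ker (f ^ (r - 1)) ⊔
    ((LinearMap.ker (f ^ (s - 1))).map f ⊔ LinearMap.range (f ^ 2)) with hZ
  have Zmk : ∀ a b c, (f ^ (r - 1)) a = 0 → (f ^ (s - 1)) b = 0 →
      a + (f b + (f ^ 2) c) ∈ Z := fun a b c ha hb =>
    Submodule.add_mem_sup ha (Submodule.add_mem_sup ⟨b, hb, rfl⟩ ⟨c, rfl⟩)
  have Zex : ∀ z ∈ Z, ∃ a b c, (f ^ (r - 1)) a = 0 ∧ (f ^ (s - 1)) b = 0 ∧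
      z = a + (f b + (f ^ 2) c) := by
    intro z hz
    obtain ⟨a, ha, w, hw, rfl⟩ := Submodule.mem_sup.1 hz
    obtain ⟨_, ⟨b, hb, rfl⟩, _, ⟨c, rfl⟩, rfl⟩ := Submodule.mem_sup.1 hw
    exact ⟨a, b, c, ha, hb, rfl⟩
  have ZA : ∀ a, (f ^ (r - 1)) a = 0 → a ∈ Z := fun a ha => by
    simpa using Zmk a 0 0 ha (by simp)
  have ZB : ∀ b, (f ^ (s - 1)) b = 0 → f b ∈ Z := fun b hb => by
    simpa using Zmk 0 b 0 (by simp) hb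
  have ZC : ∀ c, (f ^ 2) c ∈ Z := fun c => by
    simpa using Zmk 0 0 c (by simp) (by simp)
  have Zh : ∀ g : V →ₗ[ZMod 2] V, g ∘ₗ f = f ∘ₗ g → ∀ z ∈ Z, g z ∈ Z := by
    intro g hg z hz
    obtain ⟨a, b, c, ha, hb, rfl⟩ := Zex z hz
    have hp := comm_pow_app hg
    have hgb : g (f b) = f (g b) := by simpa using hp 1 b
    rw [map_add, map_add, hp, hgb]
    exact Zmk _ _ _ (by rw [← hp, ha, map_zero]) (by rw [← hp, hb, map_zero])
  have hxZ : x ∉ Z := by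
    intro hx
    obtain ⟨a, b, c, ha, hb, he⟩ := Zex x hx
    apply x2
    refine ⟨b + f c, ?_⟩
    rw [he]
    obtain ⟨k, rfl⟩ : ∃ k, r = k + 1 := ⟨r - 1, by omega⟩
    simp only [Nat.add_sub_cancel] at *
    simp only [map_add, ha, hf', pow_app_add, zero_add]
  have hyZ : f y ∉ Z := by
    intro hx
    obtain ⟨a, b, c, ha, hb, he⟩ := Zex _ hx
    apply y2
    refine ⟨c, ?_⟩
    obtain ⟨k, rfl⟩ : ∃ k, s = k + 2 := ⟨s - 2, by omega⟩
    simp only [Nat.add_succ_sub_one] at *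
    have hyy : (f ^ (k + 1)) y = (f ^ k) (f y) := (hf' k y).symm
    rw [hyy, he, map_add, map_add, hf', hb, pow_app_add, hmono (r - 1) k (by omega) a ha]
    simp
  have hyx : ∀ z ∈ Z, x ≠ z + (x + f y) := by
    intro z hz he
    apply hyZ
    have : f y = - z := by
      have h0 : z + f y = 0 := by
        have h1 : x + (z + f y) = x + 0 := by rw [add_zero]; conv_rhs => rw [he]
                                              abel
        exact add_left_cancel h1
      exact eq_neg_of_add_eq_zero_right h0
    rw [this]; exact Z.neg_mem hz
  set X := Z ⊔ Submodule.span (ZMod 2) {x + f y} with hX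
  have ZX : ∀ z ∈ Z, z ∈ X := fun z hz => (le_sup_left : Z ≤ X) hz
  have hXm : x + f y ∈ X := (le_sup_right : _ ≤ X) (Submodule.mem_span_singleton_self _)
  have Xle : ∀ g : V →ₗ[ZMod 2] V, g ∘ₗ f = f ∘ₗ g → g (x + f y) ∈ X → X.map g ≤ X := by
    intro g hg h
    rw [hX, Submodule.map_sup, sup_le_iff]
    constructor
    · rintro _ ⟨z, hz, rfl⟩; exact ZX _ (Zh g hg z hz)
    · rw [Submodule.map_span_le]
      rintro _ rfl; exact h
  have hA : ∀ α : V ≃ₗ[ZMod 2] V, (α : V →ₗ[ZMod 2] V) ∘ₗ f = f ∘ₗ (α : V →ₗ[ZMod 2] V) →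
      X.map (α : V →ₗ[ZMod 2] V) ≤ X := by
    intro α hα
    apply Xle _ hα
    obtain ⟨a, c, ha, hc, e1⟩ := auto_move f r hr x x1 x2 x3 α hα
    obtain ⟨a', c', ha', hc', e2⟩ := auto_move f s (by omega) y y1 y2 y3 α hα
    have hgb : α (f y) = f (α y) := by simpa using comm_pow_app hα 1 y
    have : (α : V →ₗ[ZMod 2] V) (x + f y) =
        (x + f y) + (a + f c + (f a' + (f ^ 2) c')) := by
      simp only [LinearEquiv.coe_coe, map_add, hgb, e1, e2]
      have : (f ^ 2) c' = f (f c') := by rw [pow_two]; rfl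
      rw [this]; abel
    rw [this]
    refine X.add_mem hXm (ZX _ (Z.add_mem (Z.add_mem (ZA _ ha) (ZB _ ?_))
      (Z.add_mem (ZB _ ha') (ZC _))))
    exact hmono _ _ (by omega) _ hc
  refine ⟨X, ⟨?_, ?_⟩, ?_⟩
  · apply Xle f rfl
    rw [map_add]
    refine X.add_mem (ZX _ (ZA _ ?_)) (ZX _ ?_)
    · rw [hf', Nat.sub_add_cancel hr, x1]
    · have : f (f y) = (f ^ 2) y := by rw [pow_two]; rfl
      rw [this]; exact ZC _
  · intro α hα
    refine le_antisymm (hA α hα) ?_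
    have := hA α.symm (by
      ext v
      apply α.injective
      have h1 := LinearMap.congr_fun hα (α.symm v)
      simp only [LinearMap.comp_apply, LinearEquiv.coe_coe] at h1 ⊢
      rw [h1, α.apply_symm_apply, α.apply_symm_apply])
    intro v hv
    exact ⟨α.symm v, this ⟨v, hv, rfl⟩, by simp⟩
  · intro hH
    obtain ⟨k, rfl⟩ : ∃ k, r = k + 1 := ⟨r - 1, by omega⟩
    obtain ⟨g, hg, ⟨a, ha, ha'⟩, hgy⟩ := proj_exists f k x x1 x2
    obtain ⟨b, hb, hb'⟩ := hgy y
    have h1 : g (x + f y) ∈ X := hH g hg ⟨_, hXm, rfl⟩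
    have h2 : x ∈ X := by
      have : x = g (x + f y) - (f a + f b) := by rw [map_add, ha, hb]; abel
      rw [this]
      exact X.sub_mem h1 (ZX _ (Z.add_mem (ZA _ ha') (ZA _ hb')))
    obtain ⟨z, hz, w, hw, he⟩ := Submodule.mem_sup.1 h2
    obtain ⟨c, rfl⟩ := Submodule.mem_span_singleton.1 hw
    have hk : c = 0 ∨ c = 1 := (by decide : ∀ k : ZMod 2, k = 0 ∨ k = 1) c
    rcases hk with rfl | rfl
    · apply hxZ; rw [← he]; simpa using hz
    · exact hyx z hz (by rw [one_smul] at he; exact he.symm)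
end rev
section fwd
open Polynomial

/-- A decomposition of `V` into cyclic blocks, given by commuting projections. -/
structure Blocks {K V : Type*} [Field K] [AddCommGroup V] [Module K V] (f : V →ₗ[K] V) where
  d : ℕ
  t : Fin d → ℕ
  e : Fin d → V →ₗ[K] V
  u : Fin d → V
  comm : ∀ i v, e i (f v) = f (e i v)
  sum : ∀ v, ∑ i, e i v = v
  idem : ∀ i v, e i (e i v) = e i v
  orth : ∀ i j v, i ≠ j → e i (e j v) = 0
  gen : ∀ i v, ∃ p : K[X], e i v = aeval f p (u i)
  eu : ∀ i, e i (u i) = u i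
  ann : ∀ i (p : K[X]), aeval f p (u i) = 0 ↔ X ^ t i ∣ p

theorem exists_blocks {K V : Type*} [Field K] [AddCommGroup V] [Module K V]
    [FiniteDimensional K V] (f : V →ₗ[K] V) (hf : IsNilpotent f) : Nonempty (Blocks f) := by
  classical
  obtain ⟨n, hn⟩ := hf
  have htor : Module.IsTorsion' (Module.AEval' f) (Submonoid.powers (X : K[X])) := by
    intro x
    refine ⟨⟨X ^ n, n, rfl⟩, ?_⟩
    obtain ⟨v, rfl⟩ := (Module.AEval'.of f).surjective x
    change (X ^ n : K[X]) • Module.AEval'.of f v = 0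
    rw [Module.AEval'.X_pow_smul_of, hn]; simp
  obtain ⟨d, t, ⟨Φ⟩⟩ := Module.torsion_by_prime_power_decomposition
    (Polynomial.irreducible_X (R := K)) htor
  let of := Module.AEval'.of f
  let E : Fin d → Module.AEval' f →ₗ[K[X]] Module.AEval' f := fun i =>
    Φ.symm.toLinearMap ∘ₗ (DirectSum.lof K[X] (Fin d)
      (fun i => K[X] ⧸ Submodule.span K[X] {(X : K[X]) ^ (t i)}) i) ∘ₗ
      (DirectSum.component K[X] (Fin d)
      (fun i => K[X] ⧸ Submodule.span K[X] {(X : K[X]) ^ (t i)}) i) ∘ₗ Φ.toLinearMap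
  let U : Fin d → Module.AEval' f := fun i => Φ.symm (DirectSum.lof K[X] (Fin d)
      (fun i => K[X] ⧸ Submodule.span K[X] {(X : K[X]) ^ (t i)}) i (Submodule.Quotient.mk 1))
  have hE : ∀ i v, E i v = Φ.symm (DirectSum.lof K[X] (Fin d)
      (fun i => K[X] ⧸ Submodule.span K[X] {(X : K[X]) ^ (t i)}) i (Φ v i)) := fun i v => rfl
  have hofs : ∀ (p : K[X]) w, of.symm (p • w) = aeval f p (of.symm w) := by
    intro p w; exact Module.AEval.of_symm_smul f p w
  have hX : ∀ v, of (f v) = (X : K[X]) • of v := fun v => (Module.AEval'.X_smul_of f v).symm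
  refine ⟨⟨d, t, fun i => of.symm.toLinearMap ∘ₗ ((E i).restrictScalars K) ∘ₗ of.toLinearMap,
    fun i => of.symm (U i), ?_, ?_, ?_, ?_, ?_, ?_, ?_⟩⟩
  · intro i v
    change of.symm (E i (of (f v))) = f (of.symm (E i (of v)))
    rw [hX, map_smul, hofs, aeval_X]
  · intro v
    change ∑ i, of.symm (E i (of v)) = v
    rw [← map_sum, LinearEquiv.symm_apply_eq]
    simp only [hE]
    rw [← map_sum, LinearEquiv.symm_apply_eq]
    exact DirectSum.sum_univ_of _
  · intro i v
    change of.symm (E i (of (of.symm (E i (of v))))) = of.symm (E i (of v))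
    rw [LinearEquiv.apply_symm_apply, hE i (E i (of v)), hE i (of v), LinearEquiv.apply_symm_apply]
    simp [DirectSum.lof_apply]
  · intro i j v hij
    change of.symm (E i (of (of.symm (E j (of v))))) = 0
    rw [LinearEquiv.apply_symm_apply, hE i (E j (of v)), hE j (of v), LinearEquiv.apply_symm_apply]
    rw [DirectSum.lof_eq_of, DirectSum.lof_eq_of, DirectSum.of_eq_of_ne _ _ _ hij]
    simp
  · intro i v
    obtain ⟨p, hp⟩ := Submodule.Quotient.mk_surjective _ (Φ (of v) i)
    refine ⟨p, ?_⟩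
    change of.symm (E i (of v)) = _
    rw [← hofs, hE, ← hp]
    congr 1
    rw [← map_smul, ← map_smul, ← Submodule.Quotient.mk_smul, smul_eq_mul, mul_one]
  · intro i
    change of.symm (E i (of (of.symm (U i)))) = _
    rw [LinearEquiv.apply_symm_apply, hE]
    simp only [U]
    rw [LinearEquiv.apply_symm_apply, DirectSum.lof_apply]
  · intro i p
    rw [← hofs, LinearEquiv.map_eq_zero_iff]
    simp only [U]
    rw [← map_smul, LinearEquiv.map_eq_zero_iff, ← map_smul, ← Submodule.Quotient.mk_smul,
      smul_eq_mul, mul_one, ← Ideal.mem_span_singleton]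
    rw [← Submodule.Quotient.mk_eq_zero]
    constructor
    · intro h
      have := DirectSum.of_injective (β := 
        (fun i => K[X] ⧸ Submodule.span K[X] {(X : K[X]) ^ (t i)})) i
      apply this
      rw [map_zero]; exact h
    · intro h
      have h' : (Submodule.Quotient.mk p : K[X] ⧸ Submodule.span K[X] {(X : K[X]) ^ (t i)}) = 0 := h
      rw [h', map_zero]

variable {K V : Type*} [Field K] [AddCommGroup V] [Module K V] {f : V →ₗ[K] V}

theorem aeval_comm_app {g : V →ₗ[K] V} (h : ∀ v, g (f v) = f (g v)) (p : K[X]) (v : V) :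
    g (aeval f p v) = aeval f p (g v) := by
  have hc : Commute g f := LinearMap.ext h
  have h1 : Commute g (aeval f p) := by
    induction p using Polynomial.induction_on' with
    | add p q hp hq => rw [map_add]; exact hp.add_right hq
    | monomial n a =>
      rw [aeval_monomial]
      exact Commute.mul_right (Algebra.commutes a g).symm (hc.pow_right n)
  exact LinearMap.congr_fun h1.eq v

theorem aeval_mem {X' : Submodule K V} (h : ∀ v ∈ X', f v ∈ X') (p : K[X]) (v : V)
    (hv : v ∈ X') : aeval f p v ∈ X' := by
  induction p using Polynomial.induction_on' with
  | add p q hp hq => rw [map_add]; exact X'.add_mem hp hq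
  | monomial n a =>
    rw [aeval_monomial]
    change algebraMap K (Module.End K V) a ((f ^ n) v) ∈ X'
    rw [Module.algebraMap_end_apply]
    apply X'.smul_mem
    induction n with
    | zero => simpa
    | succ n ih => rw [pow_succ']; exact h _ ih

theorem aeval_mul_app (p q : K[X]) (v : V) : aeval f (p * q) v = aeval f p (aeval f q v) := by
  rw [map_mul]; rfl

theorem aeval_Xpow_app (n : ℕ) (v : V) : aeval f (X ^ n : K[X]) v = (f ^ n) v := by
  rw [map_pow, aeval_X]

theorem poly_factor (hf : IsNilpotent f) (p : K[X]) (hp : p ≠ 0) :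
    ∃ (a : ℕ) (p' q : K[X]), (∀ v, aeval f p v = aeval f p' ((f ^ a) v)) ∧
      ∀ v, (f ^ a) v = aeval f q (aeval f p v) := by
  obtain ⟨n, hn⟩ := hf
  obtain ⟨a, p', hp', he⟩ := WfDvdMonoid.max_power_factor hp (irreducible_X (R := K))
  have hco : IsCoprime (X ^ n : K[X]) p' :=
    IsCoprime.pow_left (((irreducible_X (R := K)).coprime_iff_not_dvd).2 hp')
  obtain ⟨c, q, hcq⟩ := hco
  refine ⟨a, p', q, ?_, ?_⟩
  · intro v
    rw [he, mul_comm, aeval_mul_app, aeval_Xpow_app]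
  · intro v
    rw [he, ← aeval_mul_app]
    have : q * (X ^ a * p') = X ^ a - (X ^ a * c) * X ^ n := by
      have : q * p' = 1 - c * X ^ n := by rw [← hcq]; ring
      calc q * (X ^ a * p') = X ^ a * (q * p') := by ring
        _ = _ := by rw [this]; ring
    rw [this, map_sub, LinearMap.sub_apply, aeval_mul_app, aeval_Xpow_app, aeval_Xpow_app, hn]
    simp

namespace Blocks
variable (B : Blocks f)

theorem ex_map (i : Fin B.d) (w : V) (hw : (f ^ B.t i) w = 0) :
    ∃ h : V →ₗ[K] V, (∀ v, h (f v) = f (h v)) ∧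
      ∀ v (p : K[X]), B.e i v = aeval f p (B.u i) → h v = aeval f p w := by
  choose P hP using B.gen i
  have key : ∀ v (p : K[X]), B.e i v = aeval f p (B.u i) → aeval f (P v) w = aeval f p w := by
    intro v p hp
    rw [hP] at hp
    have h0 : aeval f (P v - p) (B.u i) = 0 := by
      rw [map_sub, LinearMap.sub_apply, hp, sub_self]
    obtain ⟨q, hq⟩ := (B.ann i _).1 h0
    have h1 : aeval f (P v - p) w = 0 := by
      rw [hq, mul_comm, aeval_mul_app, aeval_Xpow_app, hw, map_zero]
    rw [map_sub, LinearMap.sub_apply] at h1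
    exact sub_eq_zero.1 h1
  refine ⟨⟨⟨fun v => aeval f (P v) w, ?_⟩, ?_⟩, ?_, ?_⟩
  · intro v v'
    rw [key (v + v') (P v + P v'), map_add, LinearMap.add_apply]
    rw [map_add, hP v, hP v', map_add, LinearMap.add_apply]
  · intro c v
    change aeval f (P (c • v)) w = c • aeval f (P v) w
    rw [key (c • v) (c • P v), map_smul, LinearMap.smul_apply]
    rw [map_smul, hP v, map_smul, LinearMap.smul_apply]
  · intro v
    change aeval f (P (f v)) w = f (aeval f (P v) w)
    rw [key (f v) (X * P v), aeval_mul_app, aeval_X]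
    rw [B.comm, hP v, aeval_mul_app, aeval_X]
  · exact key

theorem fu_zero (i : Fin B.d) : (f ^ B.t i) (B.u i) = 0 := by
  rw [← aeval_Xpow_app, B.ann]

theorem e_u_ne (i j : Fin B.d) (h : i ≠ j) : B.e i (B.u j) = 0 := by
  rw [← B.eu j, B.orth i j _ h]

/-- off-diagonal -/
theorem off_mem {X' : Submodule K V} (hX : Chinv f X') (g : V →ₗ[K] V)
    (hg : ∀ v, g (f v) = f (g v)) (i j : Fin B.d) (hij : i ≠ j) (v : V) (hv : v ∈ X') :
    B.e i (g (B.e j v)) ∈ X' := by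
  let h : V →ₗ[K] V := B.e i ∘ₗ g ∘ₗ B.e j
  have hh : ∀ v, h (h v) = 0 := by
    intro v
    change B.e i (g (B.e j (B.e i _))) = 0
    rw [B.orth j i _ hij.symm]; simp
  have hc : ∀ v, h (f v) = f (h v) := by
    intro v
    change B.e i (g (B.e j (f v))) = f (B.e i (g (B.e j v)))
    rw [B.comm, hg, B.comm]
  let α : V ≃ₗ[K] V := LinearEquiv.ofLinearMap (LinearMap.id + h) (LinearMap.id - h)
    (by ext v; simp [hh]) (by ext v; simp [hh])
  have := hX.2 α (by ext v; simp [α, hc])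
  have h1 : v + h v ∈ X' := by
    rw [← this]; exact ⟨v, hv, by simp [α]⟩
  have := X'.sub_mem h1 hv
  simpa [h] using this

/-- image of a vector of `X'` under `u j ↦ w`, where `w` lies in block `i` -/
theorem transfer {X' : Submodule K V} (hX : Chinv f X') (i j : Fin B.d) (hij : i ≠ j)
    (w : V) (hw : (f ^ B.t j) w = 0) (hwi : B.e i w = w) (v : V) (hv : v ∈ X') (p : K[X])
    (hp : B.e j v = aeval f p (B.u j)) : aeval f p w ∈ X' := by
  obtain ⟨h, h1, h2⟩ := B.ex_map j w hw
  have h3 := B.off_mem hX h h1 i j hij v hv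
  rwa [h2 (B.e j v) p (by rw [B.idem, hp]), aeval_comm_app (B.comm i), hwi] at h3

theorem mem_of_eq {X' : Submodule K V} (hX : Chinv f X') (i j : Fin B.d) (hij : i ≠ j)
    (ht : B.t i = B.t j) (v : V) (hv : v ∈ X') : B.e i v ∈ X' := by
  obtain ⟨p, hp⟩ := B.gen i v
  have h1 := B.transfer hX j i hij.symm (B.u j) (by rw [ht]; exact B.fu_zero j) (B.eu j) v hv p hp
  have h2 := B.transfer hX i j hij (B.u i) (by rw [← ht]; exact B.fu_zero i) (B.eu i) _ h1 p
    (by rw [aeval_comm_app (B.comm j), B.eu])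
  rwa [hp]

theorem mem_of_zero {X' : Submodule K V} (i : Fin B.d)
    (ht : B.t i = 0) (v : V) : B.e i v ∈ X' := by
  obtain ⟨p, hp⟩ := B.gen i v
  have : B.u i = 0 := by simpa [ht] using B.fu_zero i
  rw [hp, this, map_zero]; exact X'.zero_mem

theorem mem_single {X' : Submodule K V} (i : Fin B.d) (v : V) (hv : v ∈ X')
    (h : ∀ k, k ≠ i → B.e k v ∈ X') : B.e i v ∈ X' := by
  have h1 := B.sum v
  rw [← Finset.add_sum_erase _ _ (Finset.mem_univ i)] at h1
  rw [eq_sub_of_add_eq h1]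
  exact X'.sub_mem hv (X'.sum_mem fun k hk => h k (Finset.ne_of_mem_erase hk))

theorem mem_pair (hf : IsNilpotent f) {X' : Submodule K V} (hX : Chinv f X') (i j : Fin B.d)
    (hij : B.t j = B.t i + 1) (v : V) (hv : v ∈ X')
    (h : ∀ k, k ≠ i → k ≠ j → B.e k v ∈ X') : B.e i v ∈ X' ∧ B.e j v ∈ X' := by
  have hne : i ≠ j := by rintro rfl; omega
  have hfX : ∀ w ∈ X', f w ∈ X' := fun w hw => hX.1 ⟨w, hw, rfl⟩
  have hmono : ∀ m n, m ≤ n → ∀ v, (f ^ m) v ∈ X' → (f ^ n) v ∈ X' := by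
    intro m n hmn v hv
    obtain ⟨k, rfl⟩ := Nat.exists_eq_add_of_le hmn
    rw [add_comm, ← pow_app_add, ← aeval_Xpow_app k]
    exact aeval_mem hfX _ _ hv
  have hji : B.e j v ∈ X' → B.e i v ∈ X' := fun hj =>
    B.mem_single i v hv fun k hk => by
      by_cases hkj : k = j
      · rw [hkj]; exact hj
      · exact h k hk hkj
  have hij' : B.e i v ∈ X' → B.e j v ∈ X' := fun hj =>
    B.mem_single j v hv fun k hk => by
      by_cases hkj : k = i
      · rw [hkj]; exact hj
      · exact h k hkj hk
  suffices hor : B.e i v ∈ X' ∨ B.e j v ∈ X' by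
    rcases hor with h | h
    · exact ⟨h, hij' h⟩
    · exact ⟨hji h, h⟩
  obtain ⟨p, hp⟩ := B.gen i v
  obtain ⟨q, hq⟩ := B.gen j v
  by_cases hp0 : p = 0
  · left; rw [hp, hp0]; simp
  by_cases hq0 : q = 0
  · right; rw [hq, hq0]; simp
  obtain ⟨a, p', p'', hp1, hp2⟩ := poly_factor hf p hp0
  obtain ⟨b, q', q'', hq1, hq2⟩ := poly_factor hf q hq0
  have h1 := B.transfer hX i j hne (B.u i)
    (by rw [hij, pow_succ']; change f ((f ^ B.t i) (B.u i)) = 0; rw [B.fu_zero, map_zero])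
    (B.eu i) v hv q hq
  have h2 := B.transfer hX j i hne.symm (f (B.u j))
    (by have := B.fu_zero j; rw [hij, pow_succ] at this; exact this)
    (by rw [B.comm, B.eu]) v hv p hp
  have h3 : (f ^ b) (B.u i) ∈ X' := by rw [hq2]; exact aeval_mem hfX _ _ h1
  have h4 : (f ^ (a + 1)) (B.u j) ∈ X' := by
    have : (f ^ (a + 1)) (B.u j) = (f ^ a) (f (B.u j)) := by rw [pow_succ]; rfl
    rw [this, hp2]; exact aeval_mem hfX _ _ h2
  rcases Nat.lt_or_ge a b with hab | hab
  · right; rw [hq, hq1]; exact aeval_mem hfX _ _ (hmono _ _ hab _ h4)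
  · left; rw [hp, hp1]; exact aeval_mem hfX _ _ (hmono _ _ hab _ h3)

theorem ulm_eq_one [FiniteDimensional K V] (i : Fin B.d) (hi : 1 ≤ B.t i)
    (hu : ∀ j, j ≠ i → B.t j ≠ B.t i) : ulm f (B.t i) = 1 := by
  obtain ⟨r, hr⟩ : ∃ k, B.t i = k + 1 := ⟨B.t i - 1, by omega⟩
  have hs' : ∀ (i : ℕ) v, (f ^ i) (f v) = (f ^ (i + 1)) v := fun i w => by rw [pow_succ]; rfl
  have hs : ∀ (i : ℕ) v, f ((f ^ i) v) = (f ^ (i + 1)) v := fun i w => by rw [pow_succ']; rfl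
  have hep : ∀ k (n : ℕ) v, B.e k ((f ^ n) v) = (f ^ n) (B.e k v) := fun k n v => by
    rw [← aeval_Xpow_app, aeval_comm_app (B.comm k), aeval_Xpow_app]
  rw [hr]
  change Module.finrank K ↥(LinearMap.ker f ⊓ LinearMap.range (f ^ r)) -
    Module.finrank K ↥(LinearMap.ker f ⊓ LinearMap.range (f ^ (r + 1))) = 1
  set z := (f ^ r) (B.u i) with hz
  set C := LinearMap.ker f ⊓ LinearMap.range (f ^ (r + 1)) with hC
  have hz0 : z ≠ 0 := by
    rw [hz, ← aeval_Xpow_app, Ne, B.ann, hr, pow_dvd_pow_iff X_ne_zero not_isUnit_X]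
    omega
  have hzi : B.e i z = z := by rw [hz, hep, B.eu]
  have hzC : ∀ w ∈ C, B.e i w = 0 := by
    rintro w ⟨_, ⟨y, rfl⟩⟩
    obtain ⟨p, hp⟩ := B.gen i y
    rw [hep, hp, ← aeval_Xpow_app, ← aeval_mul_app, mul_comm, aeval_mul_app, aeval_Xpow_app, ← hr,
      B.fu_zero, map_zero]
  have hdis : C ⊓ Submodule.span K {z} = ⊥ := by
    rw [eq_bot_iff]
    rintro w ⟨h1, h2⟩
    obtain ⟨c, rfl⟩ := Submodule.mem_span_singleton.1 h2
    have := hzC _ h1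
    rw [map_smul, hzi] at this
    exact (Submodule.mem_bot K).2 this
  have hsup : LinearMap.ker f ⊓ LinearMap.range (f ^ r) = C ⊔ Submodule.span K {z} := by
    apply le_antisymm
    · rintro x ⟨hx, ⟨w, rfl⟩⟩
      have hx' : f ((f ^ r) w) = 0 := hx
      rw [← B.sum ((f ^ r) w)]
      refine Submodule.sum_mem _ fun k _ => ?_
      obtain ⟨p, hp⟩ := B.gen k w
      have hk0 : f (B.e k ((f ^ r) w)) = 0 := by rw [← B.comm, hx', map_zero]
      have hform : B.e k ((f ^ r) w) = aeval f (X ^ r * p) (B.u k) := by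
        rw [hep, hp, aeval_mul_app, aeval_Xpow_app]
      by_cases hki : k = i
      · subst hki
        refine (le_sup_right : _ ≤ C ⊔ _) (Submodule.mem_span_singleton.2 ⟨p.coeff 0, ?_⟩)
        rw [hform, ← sub_eq_zero, hz, ← aeval_Xpow_app, ← LinearMap.smul_apply, ← map_smul,
          ← LinearMap.sub_apply, ← map_sub, B.ann, hr]
        have : p.coeff 0 • X ^ r - X ^ r * p = X ^ r * (Polynomial.C (p.coeff 0) - p) := by
          rw [smul_eq_C_mul]; ring
        rw [this, pow_succ]
        apply mul_dvd_mul_left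
        rw [X_dvd_iff]; simp
      · refine (le_sup_left : C ≤ _) ⟨hk0, ?_⟩
        rw [hform] at hk0 ⊢
        have h1 : X ^ B.t k ∣ X * (X ^ r * p) := by
          rw [← B.ann, aeval_mul_app, aeval_X, hk0]
        have hk := hu k hki
        rcases Nat.lt_or_ge (B.t k) (r + 1) with hlt | hge
        · have : aeval f (X ^ r * p) (B.u k) = 0 := by
            rw [B.ann]
            exact (pow_dvd_pow X (by omega : B.t k ≤ r)).trans (dvd_mul_right _ _)
          rw [this]; exact Submodule.zero_mem _
        · have h2 : (X : K[X]) ^ (r + 1) * X ∣ X ^ (r + 1) * p := by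
            have : (X : K[X]) ^ (r + 1) * p = X * (X ^ r * p) := by ring
            rw [this, ← pow_succ]
            exact (pow_dvd_pow X (by omega)).trans h1
          rw [mul_dvd_mul_iff_left (pow_ne_zero _ X_ne_zero)] at h2
          obtain ⟨q, hq⟩ := h2
          refine ⟨aeval f q (B.u k), ?_⟩
          rw [← aeval_Xpow_app, ← aeval_mul_app, hq]
          congr 2; ring
    · refine sup_le ?_ ?_
      · rintro v ⟨h1, ⟨w, rfl⟩⟩
        exact ⟨h1, ⟨f w, hs' r w⟩⟩
      · rw [Submodule.span_singleton_le_iff_mem]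
        refine ⟨?_, ⟨_, rfl⟩⟩
        change f z = 0
        rw [hz, hs, ← hr, B.fu_zero]
  have h1 := Submodule.finrank_sup_add_finrank_inf_eq C (Submodule.span K {z})
  rw [hdis, finrank_bot, finrank_span_singleton hz0] at h1
  rw [hsup]; omega

theorem mem_all [FiniteDimensional K V] (hf : IsNilpotent f)
    (hno : ¬ ∃ r s : ℕ, 1 ≤ r ∧ r + 1 < s ∧ ulm f s = 1 ∧ ulm f r = 1)
    {X' : Submodule K V} (hX : Chinv f X') (i : Fin B.d) (v : V) (hv : v ∈ X') :
    B.e i v ∈ X' := by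
  by_contra hcon
  have hbad : ∀ i, B.e i v ∉ X' → 1 ≤ B.t i ∧ (∀ j, j ≠ i → B.t j ≠ B.t i) ∧
      ulm f (B.t i) = 1 := by
    intro i hi
    have h1 : 1 ≤ B.t i := by
      by_contra h
      exact hi (B.mem_of_zero i (by omega) v)
    have h2 : ∀ j, j ≠ i → B.t j ≠ B.t i := fun j hj ht =>
      hi (B.mem_of_eq hX i j hj.symm ht.symm v hv)
    exact ⟨h1, h2, B.ulm_eq_one i h1 h2⟩
  have hclose : ∀ i j, B.e i v ∉ X' → B.e j v ∉ X' → B.t j ≤ B.t i + 1 := by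
    intro i j hi hj
    by_contra h
    exact hno ⟨B.t i, B.t j, (hbad i hi).1, by omega, (hbad j hj).2.2, (hbad i hi).2.2⟩
  obtain ⟨j, hji, hj⟩ : ∃ j, j ≠ i ∧ B.e j v ∉ X' := by
    by_contra! h
    exact hcon (B.mem_single i v hv h)
  have a1 := hclose i j hcon hj
  have a2 := hclose j i hj hcon
  have a3 := (hbad i hcon).2.1
  have a4 := (hbad j hj).2.1
  have a5 := a3 j hji
  have hoth : ∀ k, k ≠ i → k ≠ j → B.e k v ∈ X' := by
    intro k hki hkj
    by_contra hk
    have b1 := hclose i k hcon hk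
    have b2 := hclose j k hj hk
    have b3 := hclose k i hk hcon
    have b4 := hclose k j hk hj
    have b5 := a3 k hki
    have b6 := a4 k hkj
    omega
  rcases Nat.lt_or_ge (B.t i) (B.t j) with hlt | hge
  · exact hcon (B.mem_pair hf hX i j (by omega) v hv hoth).1
  · exact hj (B.mem_pair hf hX j i (by omega) v hv fun k h1 h2 => hoth k h2 h1).1

end Blocks

theorem fwd_dir [FiniteDimensional K V] (hf : IsNilpotent f)
    (hno : ¬ ∃ r s : ℕ, 1 ≤ r ∧ r + 1 < s ∧ ulm f s = 1 ∧ ulm f r = 1)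
    (X' : Submodule K V) (hX : Chinv f X') : Hinv f X' := by
  obtain ⟨B⟩ := exists_blocks f hf
  have hfX : ∀ w ∈ X', f w ∈ X' := fun w hw => hX.1 ⟨w, hw, rfl⟩
  intro g hg
  have hg' : ∀ v, g (f v) = f (g v) := fun v => LinearMap.congr_fun hg v
  rintro _ ⟨v, hv, rfl⟩
  rw [← B.sum (g v)]
  refine X'.sum_mem fun i _ => ?_
  rw [← B.sum v, map_sum, map_sum]
  refine X'.sum_mem fun j _ => ?_
  by_cases hij : i = j
  · subst hij
    obtain ⟨p, hp⟩ := B.gen i v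
    obtain ⟨q, hq⟩ := B.gen i (g (B.u i))
    have hm := B.mem_all hf hno hX i v hv
    have : B.e i (g (B.e i v)) = aeval f q (B.e i v) := by
      rw [hp, aeval_comm_app hg', aeval_comm_app (B.comm i), hq, ← aeval_mul_app,
        ← aeval_mul_app, mul_comm]
    rw [this]; exact aeval_mem hfX _ _ hm
  · exact B.off_mem hX g hg' i j hij v hv
end fwd

theorem stmt18 {V : Type*} [AddCommGroup V] [Module (ZMod 2) V]
    [FiniteDimensional (ZMod 2) V] (f : V →ₗ[ZMod 2] V) (hf : IsNilpotent f) :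
    (∃ X : Submodule (ZMod 2) V, Chinv f X ∧ ¬ Hinv f X) ↔
      (∃ r s : ℕ, 1 ≤ r ∧ r + 1 < s ∧ ulm f s = 1 ∧ ulm f r = 1) := by
  constructor
  · rintro ⟨X, hX, hH⟩
    by_contra hno
    exact hH (fwd_dir hf hno X hX)
  · rintro ⟨r, s, h1, h2, h3, h4⟩
    exact rev_dir f r s h1 h2 h3 h4
end
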